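/- arXiv:2102.04041 — 3 statements merged into one kernel-verified Lean document; each statement's English description precedes it below -/
import Mathlib

section
/- Let H be a graph with chromatic number χ(H) = k+1 (k ≥ 1) that contains a color critical edge, i.e., an edge e with χ(H − e) = k. Then there exists a natural number n₀ such that for every n ≥ n₀, every H-free graph G on n vertices satisfies ρ(G) ≤ ρ(T_{n,k}), with equality if and only if G is isomorphic to the Turán graph T_{n,k}. -/
open SimpleGraph Finset

attribute [local instance] Classical.propDecidable

/-- The spectral radius (largest adjacency eigenvalue) of a graph on `Fin n`. -/
noncomputable def adjSpectralRadius {n : ℕ} (G : SimpleGraph (Fin n)) : ℝ :=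
  sSup (spectrum ℝ (G.adjMatrix ℝ))

/-- `G` contains a copy of `H` (a subgraph isomorphic to `H`). -/
def Contains {α β : Type*} (G : SimpleGraph α) (H : SimpleGraph β) : Prop :=
  ∃ f : β ↪ α, ∀ a b, H.Adj a b → G.Adj (f a) (f b)

/-- The book `B_s`: `s` triangles sharing a common edge, i.e. `K_{2,s}` plus the
edge inside the part of size two. -/
def book (s : ℕ) : SimpleGraph (Fin 2 ⊕ Fin s) :=
  SimpleGraph.fromRel (fun x _ => x.isLeft = true)

/-- The theta graph `θ_{r+1} = θ(1,2,r+1)`: vertices `0,…,r+1` form a path of length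
`r+1`, the edge `0 ~ (r+1)`, and vertex `r+2` is adjacent to `0` and `r+1`. -/
def theta (r : ℕ) : SimpleGraph (Fin (r + 3)) :=
  SimpleGraph.fromRel (fun x y =>
    (x.val + 1 = y.val ∧ y.val ≤ r + 1) ∨
    (x.val = 0 ∧ y.val = r + 1) ∨
    (x.val = r + 2 ∧ (y.val = 0 ∨ y.val = r + 1)))

/-- The number of edges of a graph. -/
noncomputable def edgeCount {V : Type*} (G : SimpleGraph V) : ℕ := G.edgeSet.ncard

/-- The number of ordered pairs `(a,b) ∈ s × t` with `a ~ b`.  For disjoint `s` and `t`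
this is the number `e(s,t)` of edges between `s` and `t`; for `s = t` it is `2·e(s)`. -/
noncomputable def ordPairs {V : Type*} (G : SimpleGraph V) (s t : Finset V) : ℕ :=
  ((s ×ˢ t).filter fun p => G.Adj p.1 p.2).card

/-- The number of edges inside a vertex subset `s`. -/
noncomputable def edgesIn {V : Type*} (G : SimpleGraph V) (s : Finset V) : ℕ :=
  (G.induce (s : Set V)).edgeSet.ncard

namespace Crit

theorem rayleigh_le {n : ℕ} (G : SimpleGraph (Fin n)) (y : Fin n → ℝ) :
    ∑ v, ∑ w, (if G.Adj v w then y v * y w else 0) ≤ adjSpectralRadius G * ∑ v, y v ^ 2 ∧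
    (0 < n → ∃ x : Fin n → ℝ, (∀ v, 0 ≤ x v) ∧ ∑ v, x v ^ 2 = 1 ∧
      ∀ v, ∑ w, (if G.Adj v w then x w else 0) = adjSpectralRadius G * x v) := by
  rcases Nat.eq_zero_or_pos n with rfl | hn
  · simp
  have : Nonempty (Fin n) := ⟨⟨0, hn⟩⟩
  set A := G.adjMatrix ℝ with hAdef
  have hA : A.IsHermitian := by
    rw [Matrix.IsHermitian, Matrix.conjTranspose_eq_transpose_of_trivial]
    exact G.transpose_adjMatrix
  set r := adjSpectralRadius G with hr
  have hspec : spectrum ℝ A = Set.range hA.eigenvalues := hA.spectrum_real_eq_range_eigenvalues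
  have hfin : (spectrum ℝ A).Finite := by rw [hspec]; exact Set.finite_range _
  have hne : (spectrum ℝ A).Nonempty := by rw [hspec]; exact Set.range_nonempty _
  have hr' : r = sSup (spectrum ℝ A) := rfl
  have hle : ∀ i, hA.eigenvalues i ≤ r := fun i => by
    rw [hr']; exact le_csSup hfin.bddAbove (hA.eigenvalues_mem_spectrum_real i)
  obtain ⟨i, hi⟩ : ∃ i, hA.eigenvalues i = r := by
    have := hne.csSup_mem hfin
    rw [← hr', hspec] at this
    exact this
  have hB : (r • (1 : Matrix (Fin n) (Fin n) ℝ) - A).IsHermitian := by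
    refine Matrix.IsHermitian.sub ?_ hA
    rw [Matrix.IsHermitian, Matrix.conjTranspose_eq_transpose_of_trivial]
    simp
  have hpsd : (r • (1 : Matrix (Fin n) (Fin n) ℝ) - A).PosSemidef := by
    rw [hB.posSemidef_iff_eigenvalues_nonneg]
    intro j
    have h1 := hB.eigenvalues_mem_spectrum_real j
    simp only [Pi.zero_apply]
    generalize hB.eigenvalues j = μ at h1 ⊢
    have h2 : r • (1 : Matrix (Fin n) (Fin n) ℝ) = algebraMap ℝ _ r := by
      rw [Algebra.algebraMap_eq_smul_one]
    have h3 := spectrum.singleton_sub_eq A r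
    rw [h2, ← h3, Set.mem_sub] at h1
    obtain ⟨a, ha, b, hb, hab⟩ := h1
    rw [Set.mem_singleton_iff] at ha
    rw [hspec] at hb
    obtain ⟨l, rfl⟩ := hb
    have := hle l
    linarith
  have hform : ∀ y : Fin n → ℝ, star y ⬝ᵥ ((r • (1 : Matrix (Fin n) (Fin n) ℝ) - A).mulVec y)
      = r * ∑ v, y v ^ 2 - ∑ v, ∑ w, (if G.Adj v w then y v * y w else 0) := by
    intro y
    rw [Matrix.sub_mulVec, dotProduct_sub, Matrix.smul_mulVec, Matrix.one_mulVec]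
    simp only [dotProduct, Matrix.mulVec, hAdef, SimpleGraph.adjMatrix_apply, Pi.smul_apply,
      smul_eq_mul, star_trivial, Finset.mul_sum]
    congr 1
    · refine Finset.sum_congr rfl fun v _ => by ring
    · refine Finset.sum_congr rfl fun v _ => Finset.sum_congr rfl fun w _ => ?_
      split_ifs <;> simp
  refine ⟨?_, fun _ => ?_⟩
  · have := hpsd.dotProduct_mulVec_nonneg y
    rw [hform] at this
    linarith
  · set z : Fin n → ℝ := (hA.eigenvectorBasis i).ofLp with hz
    have hz1 : A.mulVec z = r • z := by
      have := hA.mulVec_eigenvectorBasis i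
      rw [hi] at this
      exact this
    have hz2 : ∑ v, z v ^ 2 = 1 := by
      have h := hA.eigenvectorBasis.orthonormal.1 i
      have h2 := EuclideanSpace.norm_sq_eq (hA.eigenvectorBasis i)
      rw [h] at h2
      simp only [Real.norm_eq_abs, sq_abs] at h2
      rw [hz, ← h2]; norm_num
    have hz3 : star z ⬝ᵥ ((r • (1 : Matrix (Fin n) (Fin n) ℝ) - A).mulVec z) = 0 := by
      rw [Matrix.sub_mulVec, hz1, Matrix.smul_mulVec, Matrix.one_mulVec]; simp
    rw [hform] at hz3
    have hz4 : star (fun v => |z v|) ⬝ᵥ ((r • (1 : Matrix (Fin n) (Fin n) ℝ) - A).mulVec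
        (fun v => |z v|)) = 0 := by
      apply le_antisymm _ (hpsd.dotProduct_mulVec_nonneg _)
      rw [hform]
      have hcmp : ∑ v, ∑ w, (if G.Adj v w then z v * z w else 0) ≤
          ∑ v, ∑ w, (if G.Adj v w then |z v| * |z w| else 0) := by
        refine Finset.sum_le_sum fun v _ => Finset.sum_le_sum fun w _ => ?_
        split_ifs
        · rw [← abs_mul]; exact le_abs_self _
        · exact le_refl (0 : ℝ)
      simp only [sq_abs]
      linarith
    rw [hpsd.dotProduct_mulVec_zero_iff] at hz4
    refine ⟨fun v => |z v|, fun v => abs_nonneg _, by simpa using hz2, fun v => ?_⟩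
    have := congrFun hz4 v
    rw [Matrix.sub_mulVec, Matrix.smul_mulVec, Matrix.one_mulVec] at this
    simp only [Pi.sub_apply, Pi.smul_apply, smul_eq_mul, Pi.zero_apply, Matrix.mulVec, dotProduct,
      hAdef, SimpleGraph.adjMatrix_apply, ite_mul, one_mul, zero_mul] at this
    linarith

theorem exists_perron {n : ℕ} (hn : 0 < n) (G : SimpleGraph (Fin n)) :
    ∃ x : Fin n → ℝ, (∀ v, 0 ≤ x v) ∧ ∑ v, x v ^ 2 = 1 ∧
      ∀ v, ∑ w, (if G.Adj v w then x w else 0) = adjSpectralRadius G * x v :=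
  (rayleigh_le G 0).2 hn

/-- isomorphic graphs have equal radius -/
theorem rho_iso {n : ℕ} {G G' : SimpleGraph (Fin n)} (e : G ≃g G') :
    adjSpectralRadius G ≤ adjSpectralRadius G' := by
  rcases Nat.eq_zero_or_pos n with rfl | hn
  · rw [Subsingleton.elim G G']
  obtain ⟨x, hx0, hx1, hx⟩ := exists_perron hn G
  have h := (rayleigh_le G' (fun v => x (e.symm v))).1
  have h1 : ∑ v, x (e.symm v) ^ 2 = 1 := by
    rw [← hx1]; exact Equiv.sum_comp e.symm.toEquiv (fun v => x v ^ 2)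
  have h2 : ∑ v, ∑ w, (if G'.Adj v w then x (e.symm v) * x (e.symm w) else 0)
      = adjSpectralRadius G := by
    rw [← Equiv.sum_comp e.toEquiv]
    have : ∀ v, ∑ w, (if G'.Adj (e v) w then x (e.symm (e v)) * x (e.symm w) else 0)
        = adjSpectralRadius G * x v ^ 2 := by
      intro v
      rw [← Equiv.sum_comp e.toEquiv]
      have h3 := hx v
      rw [pow_two, ← mul_assoc, ← h3, Finset.sum_mul]
      refine Finset.sum_congr rfl fun w _ => ?_
      simp only [RelIso.coe_fn_toEquiv, e.map_adj_iff, RelIso.symm_apply_apply]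
      split_ifs <;> ring
    calc _ = ∑ v, adjSpectralRadius G * x v ^ 2 := Finset.sum_congr rfl fun v _ => this v
      _ = _ := by rw [← Finset.mul_sum, hx1, mul_one]
  rw [h2, h1, mul_one] at h
  exact h


theorem part_ineq {n k : ℕ} (hn : 0 < n) (G : SimpleGraph (Fin n)) (c : Fin n → Fin k)
    (hc : ∀ v w, G.Adj v w → c v ≠ c w) (hpos : 0 < adjSpectralRadius G) (N : Fin k → ℕ)
    (hN : ∀ i, N i = (univ.filter fun v => c v = i).card) :
    1 ≤ ∑ i, (N i : ℝ) / (adjSpectralRadius G + N i) ∧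
    (∑ i, (N i : ℝ) / (adjSpectralRadius G + N i) = 1 → ∀ v w, c v ≠ c w → G.Adj v w) ∧
    ((∀ v w, c v ≠ c w → G.Adj v w) → ∑ i, (N i : ℝ) / (adjSpectralRadius G + N i) = 1) := by
  obtain ⟨x, hx0, hx1, hx⟩ := exists_perron hn G
  set l := adjSpectralRadius G with hl
  set S : ℝ := ∑ v, x v with hS
  set s : Fin k → ℝ := fun i => ∑ v ∈ univ.filter (fun v => c v = i), x v with hs
  have hsum : ∑ i, s i = S := by
    rw [hs, hS]; exact Finset.sum_fiberwise univ c x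
  have hSpos : 0 < S := by
    rcases (Finset.sum_nonneg fun v _ => hx0 v : 0 ≤ S).lt_or_eq with h | h
    · exact h
    · have h2 := (Finset.sum_eq_zero_iff_of_nonneg (fun v _ => hx0 v)).1 h.symm
      exfalso
      have : ∑ v, x v ^ 2 = 0 := Finset.sum_eq_zero fun v hv => by rw [h2 v hv]; norm_num
      linarith
  have hdiff : ∀ v, ∑ w, (if c v ≠ c w then x w else 0) = S - s (c v) := by
    intro v
    have h1 : s (c v) = ∑ w, if c w = c v then x w else 0 := by
      simp only [hs]; rw [Finset.sum_filter]
    rw [h1, hS, ← Finset.sum_sub_distrib]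
    refine Finset.sum_congr rfl fun w _ => ?_
    by_cases h : c w = c v
    · simp [h]
    · simp [h, Ne.symm h]
  have hterm : ∀ v w, (if G.Adj v w then x w else 0) ≤ (if c v ≠ c w then x w else 0) := by
    intro v w
    by_cases h : G.Adj v w
    · simp [h, hc v w h]
    · simp only [h, if_false]
      split_ifs
      · exact hx0 w
      · exact le_rfl
  have hvle : ∀ v, l * x v ≤ S - s (c v) := by
    intro v
    rw [← hx v, ← hdiff v]
    exact Finset.sum_le_sum fun w _ => hterm v w
  have hconst : ∀ i, ∑ v ∈ univ.filter (fun v => c v = i), (S - s (c v)) = N i * (S - s i) := by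
    intro i
    rw [hN i, ← nsmul_eq_mul, ← Finset.sum_const]
    refine Finset.sum_congr rfl fun v hv => ?_
    rw [(Finset.mem_filter.1 hv).2]
  have hlam : ∀ i, l * s i = ∑ v ∈ univ.filter (fun v => c v = i), l * x v := fun i => by
    rw [hs, Finset.mul_sum]
  have hden : ∀ i, 0 < l + N i := fun i => by positivity
  have hsi : ∀ i, s i ≤ S * (N i / (l + N i)) := by
    intro i
    have : l * s i ≤ N i * (S - s i) := by
      rw [hlam, ← hconst]
      exact Finset.sum_le_sum fun v _ => hvle v
    rw [← mul_div_assoc, le_div_iff₀ (hden i)]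
    linarith
  refine ⟨?_, ?_, ?_⟩
  · have h1 : S ≤ S * ∑ i, (N i : ℝ) / (l + N i) := by
      conv_lhs => rw [← hsum]
      rw [Finset.mul_sum]
      exact Finset.sum_le_sum fun i _ => hsi i
    by_contra h
    push Not at h
    nlinarith
  · intro hF
    have h1 : ∑ i, (S * (N i / (l + N i)) - s i) = 0 := by
      rw [Finset.sum_sub_distrib, hsum, ← Finset.mul_sum, hF]; ring
    have h2 := (Finset.sum_eq_zero_iff_of_nonneg (fun i _ => sub_nonneg.2 (hsi i))).1 h1
    have h3 : ∀ i, s i * (l + N i) = S * N i := by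
      intro i
      have := h2 i (mem_univ i)
      have h4 : s i = S * (N i / (l + N i)) := by linarith
      rw [h4]; field_simp [(hden i).ne']
    have h4 : ∀ i, 0 < S - s i := by
      intro i
      have h5 : (S - s i) * (l + N i) = S * l := by linarith [h3 i]
      by_contra h6
      push Not at h6
      have : 0 < S * l := mul_pos hSpos hpos
      nlinarith [hden i]
    have h5 : ∀ v, l * x v = S - s (c v) := by
      intro v
      have h6 : ∑ u ∈ univ.filter (fun u => c u = c v), (S - s (c u) - l * x u) = 0 := by
        rw [Finset.sum_sub_distrib, hconst, ← hlam]
        linarith [h3 (c v)]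
      have h7 := (Finset.sum_eq_zero_iff_of_nonneg (fun u _ => sub_nonneg.2 (hvle u))).1 h6 v
        (by simp)
      linarith
    have hxpos : ∀ v, 0 < x v := by
      intro v
      have h6 := h5 v
      have h7 := h4 (c v)
      rw [← h6] at h7
      exact pos_of_mul_pos_right h7 hpos.le
    intro v w hvw
    have h6 : ∑ w, ((if c v ≠ c w then x w else 0) - (if G.Adj v w then x w else 0)) = 0 := by
      rw [Finset.sum_sub_distrib, hdiff, hx, h5]; ring
    have h7 := (Finset.sum_eq_zero_iff_of_nonneg (fun w _ => sub_nonneg.2 (hterm v w))).1 h6 w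
      (mem_univ w)
    by_contra h8
    simp only [h8, hvw, if_false, ne_eq, not_false_eq_true, if_true, sub_zero] at h7
    exact (hxpos w).ne' h7
  · intro hcomp
    have h5 : ∀ v, l * x v = S - s (c v) := by
      intro v
      rw [← hx v, ← hdiff v]
      refine Finset.sum_congr rfl fun w _ => ?_
      have : G.Adj v w ↔ c v ≠ c w := ⟨hc v w, hcomp v w⟩
      simp only [this]
    have h6 : ∀ i, s i = S * (N i / (l + N i)) := by
      intro i
      have h7 : l * s i = N i * (S - s i) := by
        rw [hlam, ← hconst]
        exact Finset.sum_congr rfl fun v _ => h5 v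
      rw [← mul_div_assoc, eq_div_iff (hden i).ne']
      linarith
    have h7 : S * ∑ i, (N i : ℝ) / (l + N i) = S * 1 := by
      rw [Finset.mul_sum, mul_one]
      conv_rhs => rw [← hsum]
      exact Finset.sum_congr rfl fun i _ => (h6 i).symm
    exact mul_left_cancel₀ hSpos.ne' h7

/-- the chord identity for `N / (l + N)` -/
theorem chord (l q N : ℝ) (hl : 0 < l) (hq : 0 ≤ q) (hN : 0 ≤ N) :
    N / (l + N) = q / (l + q) + (N - q) * (l / ((l + q) * (l + q + 1)))
      - l * ((N - q) * (N - q - 1)) / ((l + N) * ((l + q) * (l + q + 1))) := by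
  have h1 : l + N ≠ 0 := by positivity
  have h2 : l + q ≠ 0 := by positivity
  have h3 : l + q + 1 ≠ 0 := by positivity
  field_simp
  ring

theorem prod_nonneg_int (a b : ℕ) : 0 ≤ ((a : ℝ) - b) * (a - b - 1) := by
  rcases le_or_gt a b with h | h
  · have : (a : ℝ) ≤ b := by exact_mod_cast h
    nlinarith
  · have : (b : ℝ) + 1 ≤ a := by exact_mod_cast h
    nlinarith

theorem balance {k n q : ℕ} (N t : Fin k → ℕ) (hN : ∑ i, N i = n) (ht : ∑ i, t i = n)
    (htb : ∀ i, ((t i : ℝ) - q) * (t i - q - 1) = 0) (l : ℝ) (hl : 0 < l) :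
    ∑ i, (N i : ℝ) / (l + N i) ≤ ∑ i, (t i : ℝ) / (l + t i) ∧
    (∑ i, (N i : ℝ) / (l + N i) = ∑ i, (t i : ℝ) / (l + t i) →
      ∀ i, ((N i : ℝ) - q) * (N i - q - 1) = 0) := by
  have hN' : ∑ i, (N i : ℝ) = n := by exact_mod_cast hN
  have ht' : ∑ i, (t i : ℝ) = n := by exact_mod_cast ht
  have key : ∑ i, (t i : ℝ) / (l + t i) - ∑ i, (N i : ℝ) / (l + N i) =
      ∑ i, l * (((N i : ℝ) - q) * (N i - q - 1)) / ((l + N i) * ((l + q) * (l + q + 1))) := by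
    have e1 : ∀ i, (t i : ℝ) / (l + t i) = q / (l + q) + (t i - q) * (l / ((l + q) * (l + q + 1))) := by
      intro i
      rw [chord l q (t i) hl (by positivity) (by positivity), htb i]; simp
    have e2 : ∀ i, (N i : ℝ) / (l + N i) = q / (l + q) + (N i - q) * (l / ((l + q) * (l + q + 1)))
      - l * (((N i : ℝ) - q) * (N i - q - 1)) / ((l + N i) * ((l + q) * (l + q + 1))) :=
      fun i => chord l q (N i) hl (by positivity) (by positivity)
    rw [Finset.sum_congr rfl fun i _ => e1 i, Finset.sum_congr rfl fun i _ => e2 i,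
      Finset.sum_sub_distrib, Finset.sum_add_distrib, Finset.sum_add_distrib, ← Finset.sum_mul,
      ← Finset.sum_mul, Finset.sum_sub_distrib, Finset.sum_sub_distrib, hN', ht']
    ring
  have hnn : ∀ i ∈ (univ : Finset (Fin k)), 0 ≤ l * (((N i : ℝ) - q) * (N i - q - 1)) /
      ((l + N i) * ((l + q) * (l + q + 1))) := by
    intro i _
    have := prod_nonneg_int (N i) q
    positivity
  refine ⟨?_, fun h i => ?_⟩
  · have := Finset.sum_nonneg hnn
    linarith
  · rw [h, sub_self] at key
    have h2 := (Finset.sum_eq_zero_iff_of_nonneg hnn).1 key.symm i (mem_univ i)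
    have hd : 0 < (l + N i) * ((l + q) * (l + q + 1)) := by positivity
    rw [div_eq_zero_iff] at h2
    rcases h2 with h2 | h2
    · rcases mul_eq_zero.1 h2 with h3 | h3
      · linarith
      · exact h3
    · linarith

theorem F_anti {k n : ℕ} (t : Fin k → ℕ) (ht : ∑ i, t i = n) (hn : 0 < n) {a b : ℝ} (ha : 0 < a)
    (hab : a < b) : ∑ i, (t i : ℝ) / (b + t i) < ∑ i, (t i : ℝ) / (a + t i) := by
  apply Finset.sum_lt_sum
  · intro i _
    gcongr
  · have : ∃ i, t i ≠ 0 := by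
      by_contra h
      push Not at h
      simp [h] at ht
      omega
    obtain ⟨i, hi⟩ := this
    refine ⟨i, mem_univ i, ?_⟩
    have : 0 < t i := Nat.pos_of_ne_zero hi
    gcongr


theorem sum_classes {n k : ℕ} (c : Fin n → Fin k) (N : Fin k → ℕ)
    (hN : ∀ i, N i = (univ.filter fun v => c v = i).card) : ∑ i, N i = n := by
  have := Finset.card_eq_sum_card_fiberwise (s := (univ : Finset (Fin n)))
    (t := (univ : Finset (Fin k))) (f := c) (fun _ _ => by simp)
  rw [Finset.card_univ, Fintype.card_fin] at this
  rw [this]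
  exact Finset.sum_congr rfl fun i _ => hN i

theorem sum_pairs {n k : ℕ} (G : SimpleGraph (Fin n)) (c : Fin n → Fin k) (N : Fin k → ℕ)
    (hN : ∀ i, N i = (univ.filter fun v => c v = i).card)
    (hc : ∀ v w, G.Adj v w ↔ c v ≠ c w) :
    ∑ v, ∑ w, (if G.Adj v w then (1 : ℝ) else 0) = (n : ℝ) ^ 2 - ∑ i, (N i : ℝ) ^ 2 := by
  have h1 : ∀ v, ∑ w, (if G.Adj v w then (1 : ℝ) else 0) = n - N (c v) := by
    intro v
    have h2 : (N (c v) : ℝ) = ∑ w, if c w = c v then (1 : ℝ) else 0 := by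
      rw [hN]; simp
    have h3 : (n : ℝ) = ∑ w : Fin n, (1 : ℝ) := by simp
    rw [h2, h3, ← Finset.sum_sub_distrib]
    refine Finset.sum_congr rfl fun w _ => ?_
    simp only [hc]
    by_cases h : c w = c v
    · simp [h]
    · simp [h, Ne.symm h]
  rw [Finset.sum_congr rfl fun v _ => h1 v, Finset.sum_sub_distrib]
  have h4 : ∑ v, (N (c v) : ℝ) = ∑ i, (N i : ℝ) ^ 2 := by
    rw [← Finset.sum_fiberwise univ c]
    refine Finset.sum_congr rfl fun i _ => ?_
    rw [Finset.sum_congr rfl (g := fun _ => (N i : ℝ))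
      (fun v hv => by rw [(Finset.mem_filter.1 hv).2]), Finset.sum_const, ← hN, nsmul_eq_mul]
    ring
  rw [h4]; simp; ring

theorem sum_sq_bal {k n q : ℕ} (t : Fin k → ℕ) (ht : ∑ i, t i = n)
    (htb : ∀ i, ((t i : ℝ) - q) * (t i - q - 1) = 0) :
    ∑ i, (t i : ℝ) ^ 2 = (2 * q + 1) * n - k * (q * (q + 1)) := by
  have ht' : ∑ i, (t i : ℝ) = n := by exact_mod_cast ht
  have : ∀ i, (t i : ℝ) ^ 2 = (2 * q + 1) * t i - q * (q + 1) := fun i => by linarith [htb i]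
  rw [Finset.sum_congr rfl fun i _ => this i, Finset.sum_sub_distrib, ← Finset.mul_sum, ht']
  simp

theorem twice_edges {n : ℕ} (G : SimpleGraph (Fin n)) :
    ∑ v, ∑ w, (if G.Adj v w then (1 : ℝ) else 0) = 2 * (#G.edgeFinset : ℝ) := by
  have h := G.sum_degrees_eq_twice_card_edges
  have h2 : (∑ v, (G.degree v : ℝ)) = 2 * (#G.edgeFinset : ℝ) := by exact_mod_cast h
  rw [← h2]
  refine Finset.sum_congr rfl fun v _ => ?_
  rw [← G.card_neighborFinset_eq_degree, Finset.sum_boole]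
  congr 2
  ext w
  simp

theorem avg_le {n : ℕ} (G : SimpleGraph (Fin n)) :
    ∑ v, ∑ w, (if G.Adj v w then (1 : ℝ) else 0) ≤ adjSpectralRadius G * n := by
  have h := (rayleigh_le G (fun _ => 1)).1
  simpa using h

/-- Turán colour map and its class sizes. -/
def tc {n k : ℕ} (hk : 0 < k) (v : Fin n) : Fin k := ⟨v % k, Nat.mod_lt _ hk⟩

theorem tc_adj {n k : ℕ} (hk : 0 < k) (v w : Fin n) :
    (turanGraph n k).Adj v w ↔ tc hk v ≠ tc hk w := by
  simp [turanGraph_adj, tc]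

theorem tc_bal {n k : ℕ} (hk : 0 < k) (i : Fin k) :
    (((univ.filter fun v : Fin n => tc hk v = i).card : ℝ) - (n / k : ℕ)) *
      (((univ.filter fun v : Fin n => tc hk v = i).card : ℝ) - (n / k : ℕ) - 1) = 0 := by
  have h1 : (univ.filter fun v : Fin n => tc hk v = i).card = n.count (· ≡ i.val [MOD k]) := by
    rw [Nat.count_eq_card_filter_range]
    rw [← Finset.card_map Fin.valEmbedding]
    congr 1
    ext m
    simp only [Finset.mem_map, Finset.mem_filter, Finset.mem_univ, true_and, Finset.mem_range,
      Fin.valEmbedding_apply, Nat.ModEq, Nat.mod_eq_of_lt i.2]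
    constructor
    · rintro ⟨v, hv, rfl⟩
      exact ⟨v.2, by simpa [tc, Fin.ext_iff] using hv⟩
    · rintro ⟨hm, h⟩
      exact ⟨⟨m, hm⟩, by simpa [tc, Fin.ext_iff] using h, rfl⟩
  rw [h1, Nat.count_modEq_card n hk]
  split_ifs
  · push_cast; ring
  · push_cast; ring

theorem turan_facts {n k : ℕ} (hk : 2 ≤ k) (hn : 2 * k ≤ n) :
    (1 - 1 / (k : ℝ)) * n - k / n ≤ adjSpectralRadius (turanGraph n k) ∧
    0 < adjSpectralRadius (turanGraph n k) ∧
    adjSpectralRadius (turanGraph n k) ≤ (1 - 1 / (k : ℝ)) * n ∧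
    ∀ G : SimpleGraph (Fin n), G.Colorable k →
      adjSpectralRadius G ≤ adjSpectralRadius (turanGraph n k) ∧
      (adjSpectralRadius G = adjSpectralRadius (turanGraph n k) →
        Nonempty (G ≃g turanGraph n k)) := by
  have hk0 : 0 < k := by omega
  have hn0 : 0 < n := by omega
  have hkR : (2 : ℝ) ≤ k := by exact_mod_cast hk
  have hnR : 2 * (k : ℝ) ≤ n := by exact_mod_cast hn
  have hnp : (0 : ℝ) < n := by linarith
  set T := turanGraph n k with hT
  set t : Fin k → ℕ := fun i => (univ.filter fun v : Fin n => tc hk0 v = i).card with htdef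
  set q := n / k with hq
  have htb : ∀ i, ((t i : ℝ) - q) * (t i - q - 1) = 0 := fun i => tc_bal hk0 i
  have hts : ∑ i, t i = n := sum_classes (tc hk0) t fun i => rfl
  have hsq := sum_sq_bal t hts htb
  have hpairs := sum_pairs T (tc hk0) t (fun i => rfl) (fun v w => tc_adj hk0 v w)
  have hlow : (1 - 1 / (k : ℝ)) * n - k / n ≤ adjSpectralRadius T := by
    have h := avg_le T
    rw [hpairs, hsq] at h
    have hdiv : (n : ℝ) = k * q + (n % k : ℕ) := by
      exact_mod_cast (Nat.div_add_mod n k).symm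
    set s : ℝ := ((n % k : ℕ) : ℝ) with hs
    have hs0 : 0 ≤ s := by positivity
    have hsk : s ≤ k := by
      rw [hs]; exact_mod_cast (Nat.mod_lt n hk0).le
    have h2 : ((1 - 1 / (k : ℝ)) * n - k / n) * n ≤ (n : ℝ) ^ 2 - ((2 * q + 1) * n - k * (q * (q + 1))) := by
      have e1 : ((1 - 1 / (k : ℝ)) * n - k / n) * n = n ^ 2 - n ^ 2 / k - k := by
        field_simp
      have e2 : (n : ℝ) ^ 2 / k = k * q ^ 2 + 2 * q * s + s ^ 2 / k := by
        rw [hdiv]; field_simp; ring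
      have e3 : 0 ≤ s ^ 2 / k := by positivity
      have e4 : (2 * (q : ℝ) + 1) * n = (2 * q + 1) * (k * q + s) := by rw [← hdiv]
      rw [e1, e2, e4]
      nlinarith
    exact le_of_mul_le_mul_right (h2.trans h) hnp
  have hpos : 0 < adjSpectralRadius T := by
    refine lt_of_lt_of_le ?_ hlow
    have h1 : (1 : ℝ) / k ≤ 1 / 2 := by
      apply one_div_le_one_div_of_le <;> linarith
    have h2 : (k : ℝ) / n ≤ 1 / 2 := by
      rw [div_le_iff₀ hnp]; linarith
    nlinarith
  have hF : ∑ i, (t i : ℝ) / (adjSpectralRadius T + t i) = 1 :=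
    (part_ineq hn0 T (tc hk0) (fun v w => (tc_adj hk0 v w).1) hpos t (fun i => rfl)).2.2
      (fun v w => (tc_adj hk0 v w).2)
  refine ⟨hlow, hpos, ?_, ?_⟩
  · set r := adjSpectralRadius T with hr
    have hts' : ∑ i, (t i : ℝ) = n := by exact_mod_cast hts
    set a : ℝ := n / k with ha
    have ha0 : 0 < a := by positivity
    have h1 : ∀ i, (t i : ℝ) / (r + t i) ≤ a / (r + a) + (t i - a) * (r / (r + a) ^ 2) := by
      intro i
      have hti : (0 : ℝ) ≤ t i := by positivity
      have : a / (r + a) + (t i - a) * (r / (r + a) ^ 2) - (t i : ℝ) / (r + t i) =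
          r * (t i - a) ^ 2 / ((r + t i) * (r + a) ^ 2) := by
        have h1 : r + t i ≠ 0 := by positivity
        field_simp
        ring
      have h2 : 0 ≤ r * (t i - a) ^ 2 / ((r + t i) * (r + a) ^ 2) := by positivity
      linarith
    have h2 := Finset.sum_le_sum fun i (_ : i ∈ (univ : Finset (Fin k))) => h1 i
    rw [hF, Finset.sum_add_distrib, ← Finset.sum_mul, Finset.sum_sub_distrib, hts'] at h2
    simp only [Finset.sum_const, Finset.card_univ, Fintype.card_fin, nsmul_eq_mul] at h2
    have h3 : (k : ℝ) * a = n := by rw [ha]; field_simp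
    rw [h3, sub_self, zero_mul, add_zero, ← mul_div_assoc, h3, le_div_iff₀ (by positivity)] at h2
    have h4 : (1 - 1 / (k : ℝ)) * n = n - a := by rw [ha]; ring
    linarith
  · rintro G ⟨C⟩
    by_cases hG : 0 < adjSpectralRadius G
    swap
    · push Not at hG
      exact ⟨by linarith, fun h => by linarith⟩
    set N : Fin k → ℕ := fun i => (univ.filter fun v : Fin n => C v = i).card with hN
    have hNs : ∑ i, N i = n := sum_classes C N fun i => rfl
    have hp := part_ineq hn0 G C (fun v w h => C.valid h) hG N (fun i => rfl)
    have hb := balance N t hNs hts htb (adjSpectralRadius G) hG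
    have hle : adjSpectralRadius G ≤ adjSpectralRadius T := by
      by_contra hlt
      push Not at hlt
      have := F_anti t hts hn0 hpos hlt
      linarith [hp.1, hb.1]
    refine ⟨hle, fun heq => ?_⟩
    have hFG : ∑ i, (N i : ℝ) / (adjSpectralRadius G + N i) = 1 := by
      apply le_antisymm _ hp.1
      rw [← hF, ← heq]; exact hb.1
    have hNb := hb.2 (by rw [hFG, heq, hF])
    have hcomp := hp.2.1 hFG
    have hpG := sum_pairs G C N (fun i => rfl) (fun v w => ⟨fun h => C.valid h, hcomp v w⟩)
    rw [sum_sq_bal N hNs hNb, ← hsq, ← hpairs, twice_edges, twice_edges T] at hpG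
    have hcard := mul_left_cancel₀ (two_ne_zero : (2 : ℝ) ≠ 0) hpG
    rw [Nat.cast_inj] at hcard
    have hmax : G.IsTuranMaximal k := by
      refine ⟨?_, ?_⟩
      · exact (SimpleGraph.Coloring.colorable C).cliqueFree (by simp)
      · intro G' _ hG'
        rw [hcard]
        have h := (isTuranMaximal_turanGraph (n := n) hk0).2 hG'
        convert h
    have := (isTuranMaximal_iff_nonempty_iso_turanGraph hk0).1 hmax
    rwa [Fintype.card_fin] at this


theorem rho_le {n : ℕ} (hn : 0 < n) (G : SimpleGraph (Fin n)) : adjSpectralRadius G ≤ n := by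
  obtain ⟨x, hx0, hx1, hx⟩ := exists_perron hn G
  have h1 : adjSpectralRadius G ≤ (∑ v, x v) ^ 2 := by
    calc adjSpectralRadius G = ∑ v, x v * (adjSpectralRadius G * x v) := by
          have h0 : ∑ v, x v * (adjSpectralRadius G * x v) = adjSpectralRadius G * ∑ v, x v ^ 2 := by
            rw [Finset.mul_sum]
            exact Finset.sum_congr rfl fun v _ => by ring
          rw [h0, hx1, mul_one]
      _ ≤ ∑ v, x v * ∑ w, x w := by
          refine Finset.sum_le_sum fun v _ => mul_le_mul_of_nonneg_left ?_ (hx0 v)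
          rw [← hx v]
          refine Finset.sum_le_sum fun w _ => ?_
          split_ifs
          · exact le_refl _
          · exact hx0 w
      _ = _ := by rw [← Finset.sum_mul, pow_two]
  have h2 := sq_sum_le_card_mul_sum_sq (s := (univ : Finset (Fin n))) (f := x)
  rw [hx1] at h2
  simp at h2
  linarith

theorem s_bound (s M a d e l : ℝ) (hMpos : 0 < M) (ha : l = a * M)
    (h3 : s * (l ^ 2 + d * (M - d)) ≤ d) (hv : d ≤ (a - e) * M) (hd0 : 0 ≤ d) (ha4 : 1 / 4 ≤ a)
    (ha1 : a ≤ 1) (he : 0 < e) (_he1 : e ≤ 1) : s * M ≤ 1 - e / 8 := by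
  obtain ⟨b, hdb⟩ : ∃ b, d = b * M := ⟨d / M, by field_simp⟩
  subst hdb
  subst ha
  have hb0 : 0 ≤ b := nonneg_of_mul_nonneg_left hd0 hMpos
  have hba : b ≤ a - e := le_of_mul_le_mul_right hv hMpos
  have h4 : (s * M) * (a ^ 2 + b * (1 - b)) ≤ b := by
    have : (s * M) * (a ^ 2 + b * (1 - b)) * M ≤ b * M := by linarith
    exact le_of_mul_le_mul_right this hMpos
  have hbb : 0 ≤ b * (1 - b) := mul_nonneg hb0 (by linarith)
  have hden : 0 < a ^ 2 + b * (1 - b) := by positivity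
  have h5 : b ≤ (1 - e / 8) * (a ^ 2 + b * (1 - b)) := by
    have h6 : b ^ 2 ≤ (a - e) ^ 2 := by gcongr
    have h7 : b * (1 - b) ≤ 1 := by nlinarith
    have h8 : a ^ 2 ≤ 1 := by nlinarith
    have h9 : e * (1 / 4) ≤ e * a := by gcongr
    have h10 : e * e ≤ e * a := by gcongr; linarith
    have h11 : e / 8 * (a ^ 2 + b * (1 - b)) ≤ e / 8 * 2 := by gcongr; linarith
    linarith
  exact le_of_mul_le_mul_right (h4.trans h5) hden

theorem fin_bound (s m a e r : ℝ) (hmpos : 0 < m) (hs0 : 0 ≤ s) (hs2 : s * (m + 1) ≤ 1 - e / 8)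
    (hfin : a * (m + 1) * (1 - 2 * s) ≤ r * (1 - s)) (ha4 : 1 / 4 ≤ a)
    (he : 0 < e) (he1 : e ≤ 1) (hm : 16 / e ≤ m) : a * m + e / 64 ≤ r := by
  by_contra hcon
  push Not at hcon
  have hsm : 0 ≤ s * m := by positivity
  have hs3 : 0 < 1 - s := by linarith
  have hs5 : s ≤ e / 16 := by
    rw [div_le_iff₀ he] at hm
    by_contra h
    push Not at h
    have : e / 16 * (m + 1) < s * (m + 1) := by gcongr
    linarith
  have h8 : r * (1 - s) < (a * m + e / 64) * (1 - s) := mul_lt_mul_of_pos_right hcon hs3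
  have h9 : a * (1 - s * (m + 1) - s) < e / 64 := by
    have : 0 ≤ e * s := by positivity
    linarith
  have h10 : e / 16 ≤ 1 - s * (m + 1) - s := by linarith
  have h11 : 1 / 4 * (e / 16) ≤ a * (1 - s * (m + 1) - s) := by gcongr
  linarith

theorem step {m : ℕ} (G : SimpleGraph (Fin (m + 1))) (a e : ℝ)
    (ha : adjSpectralRadius G = a * (m + 1 : ℕ)) (ha4 : 1 / 4 ≤ a) (he : 0 < e) (he1 : e ≤ 1)
    (hm : 16 / e ≤ m) (v : Fin (m + 1))
    (hv : ((univ.filter fun w => G.Adj v w).card : ℝ) ≤ (a - e) * (m + 1 : ℕ)) :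
    ∃ u : Fin (m + 1), a * m + e / 64 ≤ adjSpectralRadius (G.comap u.succAbove) := by
  obtain ⟨x, hx0, hx1, hx⟩ := exists_perron (n := m + 1) (Nat.succ_pos m) G
  obtain ⟨u, -, hu⟩ := Finset.exists_min_image univ x ⟨v, mem_univ v⟩
  refine ⟨u, ?_⟩
  have hmpos : (0 : ℝ) < m := lt_of_lt_of_le (by positivity) hm
  have ha1 : a ≤ 1 := by
    have := rho_le (n := m + 1) (Nat.succ_pos m) G
    rw [ha] at this
    have h2 : (0 : ℝ) < (m + 1 : ℕ) := by positivity
    by_contra h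
    push Not at h
    nlinarith
  set M : ℝ := ((m + 1 : ℕ) : ℝ) with hM
  have hMm : M = m + 1 := by rw [hM]; push_cast; ring
  have hMpos : 0 < M := by rw [hMm]; positivity
  set l := adjSpectralRadius G with hl
  set A := univ.filter fun w => G.Adj v w with hA
  set d : ℝ := (#A : ℝ) with hd
  have hd0 : 0 ≤ d := by positivity
  set s := x u ^ 2 with hs
  have hs0 : 0 ≤ s := sq_nonneg _
  have hmin : ∀ w, s ≤ x w ^ 2 := fun w => by
    have := hu w (mem_univ w)
    have := hx0 u
    rw [hs]; gcongr
  -- Cauchy-Schwarz at `v`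
  have h1 : (l * x v) ^ 2 ≤ d * ∑ w ∈ A, x w ^ 2 := by
    rw [← hx v, ← Finset.sum_filter]
    exact sq_sum_le_card_mul_sum_sq
  have h2 : ∑ w ∈ A, x w ^ 2 ≤ 1 - (M - d) * s := by
    have h3 := Finset.sum_filter_add_sum_filter_not univ (fun w => G.Adj v w) (fun w => x w ^ 2)
    have h4 := Finset.card_nsmul_le_sum (univ.filter fun w => ¬ G.Adj v w) (fun w => x w ^ 2) s
      (fun w _ => hmin w)
    have h5 := Finset.card_filter_add_card_filter_not (s := (univ : Finset (Fin (m + 1))))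
      (fun w => G.Adj v w)
    rw [Finset.card_univ, Fintype.card_fin] at h5
    have h6 : d + (#(univ.filter fun w => ¬ G.Adj v w) : ℝ) = M := by
      rw [hd, hM, hA]; exact_mod_cast h5
    rw [nsmul_eq_mul] at h4
    have h7 : (#(univ.filter fun w => ¬ G.Adj v w) : ℝ) = M - d := by linarith
    rw [h7] at h4
    rw [hx1] at h3
    linarith
  have h3 : s * (l ^ 2 + d * (M - d)) ≤ d := by
    have h4 : l ^ 2 * s ≤ (l * x v) ^ 2 := by
      rw [mul_pow]; exact mul_le_mul_of_nonneg_left (hmin v) (sq_nonneg _)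
    have h5 := mul_le_mul_of_nonneg_left h2 hd0
    nlinarith
  -- the bound on `s`
  set g := e / 8 with hg
  have hg0 : 0 < g := by positivity
  have hs1 : s * M ≤ 1 - g := s_bound s M a d e l hMpos ha h3 hv hd0 ha4 ha1 he he1
  -- Rayleigh quotient of the smaller graph
  set r := adjSpectralRadius (G.comap u.succAbove) with hr
  have hray := (rayleigh_le (G.comap u.succAbove) (fun i => x (u.succAbove i))).1
  have e1 : ∑ i, x (u.succAbove i) ^ 2 = 1 - s := by
    rw [Fin.sum_univ_succAbove _ u] at hx1
    linarith
  have e2 : ∀ i : Fin m, ∑ j, (if (G.comap u.succAbove).Adj i j then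
      x (u.succAbove i) * x (u.succAbove j) else 0) =
      l * x (u.succAbove i) ^ 2 - (if G.Adj u (u.succAbove i) then x (u.succAbove i) else 0) * x u := by
    intro i
    have h4 := hx (u.succAbove i)
    rw [Fin.sum_univ_succAbove _ u] at h4
    have h5 : ∑ j, (if (G.comap u.succAbove).Adj i j then
      x (u.succAbove i) * x (u.succAbove j) else 0) = x (u.succAbove i) *
        ∑ j, (if G.Adj (u.succAbove i) (u.succAbove j) then x (u.succAbove j) else 0) := by
      rw [Finset.mul_sum]
      refine Finset.sum_congr rfl fun j _ => ?_
      simp only [SimpleGraph.comap_adj]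
      split_ifs <;> ring
    have h6 : ∑ j, (if G.Adj (u.succAbove i) (u.succAbove j) then x (u.succAbove j) else 0) =
        l * x (u.succAbove i) - (if G.Adj (u.succAbove i) u then x u else 0) := by linarith
    rw [h5, h6]
    by_cases h7 : G.Adj u (u.succAbove i)
    · rw [if_pos h7, if_pos h7.symm]; ring
    · rw [if_neg h7, if_neg fun h => h7 h.symm]; ring
  have e3 : ∑ i : Fin m, (if G.Adj u (u.succAbove i) then x (u.succAbove i) else 0) = l * x u := by
    have h4 := hx u
    rw [Fin.sum_univ_succAbove _ u] at h4
    simpa using h4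
  have e4 := Finset.sum_congr rfl (fun i (_ : i ∈ (univ : Finset (Fin m))) => e2 i)
  replace hray : ∑ i, (l * x (u.succAbove i) ^ 2 -
      (if G.Adj u (u.succAbove i) then x (u.succAbove i) else 0) * x u) ≤
      r * ∑ i, x (u.succAbove i) ^ 2 := by
    rw [← e4]
    convert hray
  rw [Finset.sum_sub_distrib, ← Finset.mul_sum,
    ← Finset.sum_mul, e1, e3] at hray
  have hfin : l * (1 - 2 * s) ≤ r * (1 - s) := by
    have : l * (1 - s) - l * x u * x u = l * (1 - 2 * s) := by rw [hs]; ring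
    rw [← this]; exact hray
  rw [ha, hMm] at hfin
  rw [hMm] at hs1
  exact fin_bound s m a e r hmpos hs0 hs1 hfin ha4 he he1 hm


theorem extend {m : ℕ} {ι : Type} [DecidableEq ι] (G : SimpleGraph (Fin m)) (s : Finset ι) (i₀ : ι)
    (hi₀ : i₀ ∉ s) (U : Finset (Fin m)) (B : ι → Finset (Fin m)) (T T' j : ℕ) (D : ℝ)
    (hsj : #s ≤ j) (hD : 0 ≤ D)
    (hnon : ∀ a, (#(univ.filter fun v => ¬ G.Adj a v) : ℝ) ≤ D) (hB : ∀ i ∈ s, #(B i) = T')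
    (hcomp : ∀ i ∈ s, ∀ i' ∈ s, i ≠ i' → ∀ a ∈ B i, ∀ b ∈ B i', G.Adj a b) (hTT : T < T')
    (hU : (j : ℝ) * ((T' * D) / (T' - T)) + (T'.choose T : ℝ) ^ j * T ≤ #U) :
    ∃ B' : ι → Finset (Fin m), (∀ i ∈ s, B' i ⊆ B i) ∧ B' i₀ ⊆ U ∧ (∀ i ∈ insert i₀ s, #(B' i) = T) ∧
      ∀ i ∈ insert i₀ s, ∀ i' ∈ insert i₀ s, i ≠ i' → ∀ a ∈ B' i, ∀ b ∈ B' i', G.Adj a b := by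
  have hTTR : (0 : ℝ) < T' - T := by
    have : (T : ℝ) < T' := by exact_mod_cast hTT
    linarith
  set bad : ι → Finset (Fin m) := fun i => U.filter fun v => #((B i).filter fun b => G.Adj v b) < T
    with hbad
  set good := U.filter fun v => ∀ i ∈ s, T ≤ #((B i).filter fun b => G.Adj v b) with hgood
  have hbadle : ∀ i ∈ s, (#(bad i) : ℝ) ≤ (T' * D) / (T' - T) := by
    intro i hi
    rw [le_div_iff₀ hTTR]
    have h1 : ∀ v ∈ bad i, ((T' : ℝ) - T) ≤ ∑ b ∈ B i, if ¬ G.Adj v b then (1 : ℝ) else 0 := by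
      intro v hv
      have h2 := (Finset.mem_filter.1 hv).2
      have h3 := Finset.card_filter_add_card_filter_not (s := B i) (fun b => G.Adj v b)
      rw [hB i hi] at h3
      rw [Finset.sum_boole]
      have h4 : T' ≤ T + #((B i).filter fun b => ¬ G.Adj v b) := by omega
      have h5 : (T' : ℝ) ≤ T + #((B i).filter fun b => ¬ G.Adj v b) := by exact_mod_cast h4
      linarith
    calc (#(bad i) : ℝ) * (T' - T) = ∑ v ∈ bad i, ((T' : ℝ) - T) := by
          rw [Finset.sum_const, nsmul_eq_mul]
      _ ≤ ∑ v ∈ bad i, ∑ b ∈ B i, (if ¬ G.Adj v b then (1 : ℝ) else 0) := Finset.sum_le_sum h1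
      _ = ∑ b ∈ B i, ∑ v ∈ bad i, (if ¬ G.Adj v b then (1 : ℝ) else 0) := Finset.sum_comm
      _ ≤ ∑ b ∈ B i, D := by
          refine Finset.sum_le_sum fun b _ => ?_
          refine le_trans ?_ (hnon b)
          rw [Finset.sum_boole]
          have : #((bad i).filter fun v => ¬ G.Adj v b) ≤ #(univ.filter fun v => ¬ G.Adj b v) := by
            apply Finset.card_le_card
            intro v hv
            have := (Finset.mem_filter.1 hv).2
            rw [G.adj_comm] at this
            simpa using this
          exact_mod_cast this
      _ = T' * D := by rw [Finset.sum_const, hB i hi, nsmul_eq_mul]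
  have hUle : #U ≤ #good + ∑ i ∈ s, #(bad i) := by
    refine le_trans ?_ (Nat.add_le_add_left Finset.card_biUnion_le _)
    refine le_trans (Finset.card_le_card ?_) (Finset.card_union_le _ _)
    intro v hv
    by_cases h : ∀ i ∈ s, T ≤ #((B i).filter fun b => G.Adj v b)
    · exact Finset.mem_union_left _ (Finset.mem_filter.2 ⟨hv, h⟩)
    · push Not at h
      obtain ⟨i, hi, h2⟩ := h
      exact Finset.mem_union_right _ (Finset.mem_biUnion.2 ⟨i, hi, Finset.mem_filter.2 ⟨hv, h2⟩⟩)
  have hch : 1 ≤ T'.choose T := Nat.choose_pos hTT.le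
  have hgoodge : T'.choose T ^ #s * T ≤ #good := by
    have h1 : (#U : ℝ) ≤ #good + ∑ i ∈ s, (#(bad i) : ℝ) := by exact_mod_cast hUle
    have h2 : ∑ i ∈ s, (#(bad i) : ℝ) ≤ #s * ((T' * D) / (T' - T)) := by
      have := Finset.sum_le_sum hbadle
      rwa [Finset.sum_const, nsmul_eq_mul] at this
    · have hbpos : 0 ≤ (T' * D) / (T' - T) := by positivity
      have h3 : (#s : ℝ) ≤ j := by exact_mod_cast hsj
      have h4 : (#s : ℝ) * ((T' * D) / (T' - T)) ≤ j * ((T' * D) / (T' - T)) := by gcongr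
      have h5 : (T'.choose T : ℝ) ^ #s * T ≤ (T'.choose T : ℝ) ^ j * T := by
        gcongr
        exact_mod_cast hch
      have : (T'.choose T : ℝ) ^ #s * T ≤ #good := by linarith
      exact_mod_cast this
  -- choose subsets
  have hex : ∀ v ∈ good, ∀ i ∈ s, ∃ P ∈ (B i).powersetCard T, ∀ b ∈ P, G.Adj v b := by
    intro v hv i hi
    obtain ⟨P, hP, hPc⟩ := Finset.exists_subset_card_eq ((Finset.mem_filter.1 hv).2 i hi)
    refine ⟨P, Finset.mem_powersetCard.2 ⟨fun b hb => (Finset.mem_filter.1 (hP hb)).1, hPc⟩,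
      fun b hb => (Finset.mem_filter.1 (hP hb)).2⟩
  choose! P hP hPadj using hex
  have hmaps : ∀ v ∈ good, (fun i (_ : i ∈ s) => P v i) ∈ s.pi (fun i => (B i).powersetCard T) :=
    fun v hv => Finset.mem_pi.2 fun i hi => hP v hv i hi
  have hcardpi : #(s.pi (fun i => (B i).powersetCard T)) = T'.choose T ^ #s := by
    rw [Finset.card_pi, Finset.prod_congr rfl (g := fun _ => T'.choose T), Finset.prod_const]
    intro i hi
    rw [Finset.card_powersetCard, hB i hi]
  obtain ⟨y, hy, hyc⟩ := Finset.exists_le_card_fiber_of_mul_le_card_of_maps_to (n := T) hmaps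
    (Finset.card_pos.1 (by rw [hcardpi]; positivity)) (by rw [hcardpi]; exact hgoodge)
  obtain ⟨F, hF, hFc⟩ := Finset.exists_subset_card_eq hyc
  rw [Finset.mem_pi] at hy
  have hFprop : ∀ v ∈ F, v ∈ good ∧ ∀ i (hi : i ∈ s), P v i = y i hi := by
    intro v hv
    have h1 := Finset.mem_filter.1 (hF hv)
    exact ⟨h1.1, fun i hi => congrFun (congrFun h1.2 i) hi⟩
  have hFadj : ∀ v ∈ F, ∀ i (hi : i ∈ s), ∀ b ∈ y i hi, G.Adj v b := by
    intro v hv i hi b hb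
    obtain ⟨h1, h2⟩ := hFprop v hv
    exact hPadj v h1 i hi b (by rw [h2 i hi]; exact hb)
  refine ⟨fun i => if h : i ∈ s then y i h else F, ?_, ?_, ?_, ?_⟩
  · intro i hi
    simp only [hi, dif_pos]
    exact (Finset.mem_powersetCard.1 (hy i hi)).1
  · simp only [hi₀, dif_neg, not_false_eq_true]
    intro v hv
    exact (Finset.mem_filter.1 (hFprop v hv).1).1
  · intro i hi
    by_cases h : i ∈ s
    · simp only [h, dif_pos]
      exact (Finset.mem_powersetCard.1 (hy i h)).2
    · simp only [h, dif_neg, not_false_eq_true]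
      exact hFc
  · intro i hi i' hi' hne a ha b hb
    by_cases h : i ∈ s <;> by_cases h' : i' ∈ s
    · simp only [h, h', dif_pos] at ha hb
      exact hcomp i h i' h' hne a ((Finset.mem_powersetCard.1 (hy i h)).1 ha) b
        ((Finset.mem_powersetCard.1 (hy i' h')).1 hb)
    · simp only [h, h', dif_pos, dif_neg, not_false_eq_true] at ha hb
      exact (hFadj b hb i h a ha).symm
    · simp only [h, h', dif_pos, dif_neg, not_false_eq_true] at ha hb
      exact hFadj a ha i' h' b hb
    · exfalso
      apply hne
      rcases Finset.mem_insert.1 hi with rfl | h1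
      · rcases Finset.mem_insert.1 hi' with rfl | h2
        · rfl
        · exact absurd h2 h'
      · exact absurd h1 h


theorem grow_step (j T : ℕ) (κ δ : ℝ) (hκ : 0 ≤ κ) (hδ : 0 < δ) : ∃ T' N : ℕ, T < T' ∧ ∀ m : ℕ, N ≤ m →
    (j : ℝ) * ((T' * (κ * m)) / (T' - T)) + (T'.choose T : ℝ) ^ j * T ≤ (j * κ + δ) * m := by
  obtain ⟨q, hq⟩ := exists_nat_ge (2 * (j * κ * T) / δ)
  set T' := T + 1 + q with hT'
  obtain ⟨N, hN⟩ := exists_nat_ge (2 * ((T'.choose T : ℝ) ^ j * T) / δ)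
  refine ⟨T', N, by omega, fun m hm => ?_⟩
  have hm' : (N : ℝ) ≤ m := by exact_mod_cast hm
  have h1 : 2 * ((T'.choose T : ℝ) ^ j * T) ≤ m * δ := by
    rw [← div_le_iff₀ hδ]; linarith
  rw [div_le_iff₀ hδ] at hq
  have h2 : (T' : ℝ) - T = 1 + q := by rw [hT']; push_cast; ring
  have h3 : (0 : ℝ) < 1 + q := by positivity
  have h4 : (j : ℝ) * ((T' * (κ * m)) / (T' - T)) ≤ (j * κ + δ / 2) * m := by
    rw [h2, ← mul_div_assoc, div_le_iff₀ h3]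
    have h5 : (T' : ℝ) = T + (1 + q) := by linarith
    rw [h5]
    have h6 : (j * κ * T) * m ≤ (δ / 2 * (1 + q)) * m :=
      mul_le_mul_of_nonneg_right (by linarith) (Nat.cast_nonneg m)
    linarith
  linarith

theorem grow {ι : Type} [DecidableEq ι] (s : Finset ι) (j : ℕ) (κ δ : ℝ) (hκ : 0 ≤ κ) (hδ : 0 < δ) :
    #s ≤ j + 1 → ∀ T : ℕ, ∃ N : ℕ, ∀ m : ℕ, N ≤ m → ∀ (G : SimpleGraph (Fin m)) (W : Finset (Fin m)),
    (∀ a, (#(univ.filter fun v => ¬ G.Adj a v) : ℝ) ≤ κ * m) → (j * κ + δ) * m ≤ #W →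
    ∃ B : ι → Finset (Fin m), (∀ i ∈ s, #(B i) = T) ∧ (∀ i ∈ s, B i ⊆ W) ∧
      ∀ i ∈ s, ∀ i' ∈ s, i ≠ i' → ∀ a ∈ B i, ∀ b ∈ B i', G.Adj a b := by
  induction s using Finset.induction_on with
  | empty => exact fun _ T => ⟨0, fun m _ G W _ _ => ⟨fun _ => ∅, by simp, by simp, by simp⟩⟩
  | insert i₀ s hi₀ ih =>
    intro hs T
    rw [Finset.card_insert_of_notMem hi₀] at hs
    obtain ⟨T', N1, hTT, h1⟩ := grow_step j T κ δ hκ hδ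
    obtain ⟨N2, h2⟩ := ih (by omega) T'
    refine ⟨max N1 N2, fun m hm G W hnon hW => ?_⟩
    obtain ⟨B, hB, hBW, hcomp⟩ := h2 m (le_trans (le_max_right _ _) hm) G W hnon hW
    obtain ⟨B', hB1, hB2, hB3, hB4⟩ := extend G s i₀ hi₀ W B T T' j (κ * m) (by omega) (by positivity)
      hnon hB hcomp hTT ((h1 m (le_trans (le_max_left _ _) hm)).trans hW)
    refine ⟨B', hB3, fun i hi => ?_, hB4⟩
    rcases Finset.mem_insert.1 hi with rfl | h
    · exact hB2
    · exact (hB1 i h).trans (hBW i h)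

theorem embed {V : Type*} [Fintype V] (H : SimpleGraph V) {k m : ℕ} (p q : V)
    (C : (H.deleteEdges {s(p, q)}).Coloring (Fin k)) (hC : C p = C q) (hpq : p ≠ q)
    (G : SimpleGraph (Fin m)) (x y : Fin m) (hxy : G.Adj x y) (B : Fin k → Finset (Fin m))
    (hB : ∀ i, Fintype.card V + 2 ≤ #(B i))
    (hcomp : ∀ i i', i ≠ i' → ∀ a ∈ B i, ∀ b ∈ B i', G.Adj a b)
    (hx : ∀ i, i ≠ C p → ∀ b ∈ B i, G.Adj x b ∧ G.Adj y b) : Contains G H := by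
  have hg : ∀ i, ∃ g : V → Fin m, Function.Injective g ∧ ∀ v, g v ∈ B i ∧ g v ≠ x ∧ g v ≠ y := by
    intro i
    have h1 : Fintype.card V ≤ Fintype.card ↥(((B i).erase x).erase y) := by
      rw [Fintype.card_coe]
      have := hB i
      have := Finset.pred_card_le_card_erase (s := B i) (a := x)
      have := Finset.pred_card_le_card_erase (s := (B i).erase x) (a := y)
      omega
    obtain ⟨g⟩ := Function.Embedding.nonempty_of_card_le h1
    refine ⟨fun v => (g v : Fin m), fun a b h => g.injective (Subtype.ext h), fun v => ?_⟩
    have := (g v).2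
    simp only [Finset.mem_erase] at this
    exact ⟨this.2.2, this.2.1, this.1⟩
  choose g hginj hgB using hg
  set f : V → Fin m := fun v => if v = p then x else if v = q then y else g (C v) v with hf
  have fp : f p = x := by simp [hf]
  have fq : f q = y := by simp [hf, hpq.symm]
  have fo : ∀ v, v ≠ p → v ≠ q → f v = g (C v) v := fun v h1 h2 => by simp [hf, h1, h2]
  have hcases : ∀ v, v = p ∨ v = q ∨ (v ≠ p ∧ v ≠ q) := fun v => by tauto
  have hCadj : ∀ a b, H.Adj a b → s(a, b) ≠ s(p, q) → C a ≠ C b := by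
    intro a b hab hne
    apply C.valid
    rw [SimpleGraph.deleteEdges_adj]
    exact ⟨hab, by simpa using hne⟩
  have hxyne := hxy.ne
  have hinj : Function.Injective f := by
    intro a b hab
    rcases hcases a with rfl | rfl | ⟨ha1, ha2⟩ <;> rcases hcases b with rfl | rfl | ⟨hb1, hb2⟩
    · rfl
    · rw [fp, fq] at hab; exact absurd hab hxyne
    · rw [fp, fo b hb1 hb2] at hab; exact absurd hab.symm (hgB _ b).2.1
    · rw [fp, fq] at hab; exact absurd hab.symm hxyne
    · rfl
    · rw [fq, fo b hb1 hb2] at hab; exact absurd hab.symm (hgB _ b).2.2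
    · rw [fp, fo a ha1 ha2] at hab; exact absurd hab (hgB _ a).2.1
    · rw [fq, fo a ha1 ha2] at hab; exact absurd hab (hgB _ a).2.2
    · rw [fo a ha1 ha2, fo b hb1 hb2] at hab
      by_cases h : C a = C b
      · rw [h] at hab; exact hginj _ hab
      · have := hcomp _ _ h _ (hgB (C a) a).1 _ (hgB (C b) b).1
        rw [hab] at this
        exact absurd this (G.loopless.irrefl _)
  refine ⟨⟨f, hinj⟩, fun a b hab => ?_⟩
  change G.Adj (f a) (f b)
  have key : ∀ b, b ≠ p → b ≠ q → C b ≠ C p → G.Adj x (f b) ∧ G.Adj y (f b) := by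
    intro b hb1 hb2 h
    rw [fo b hb1 hb2]
    exact hx _ h _ (hgB _ b).1
  rcases hcases a with ha | ha | ⟨ha1, ha2⟩ <;> rcases hcases b with hb | hb | ⟨hb1, hb2⟩
  · rw [ha, hb] at hab; exact absurd hab (H.loopless.irrefl _)
  · rw [ha, hb, fp, fq]; exact hxy
  · have := hCadj a b hab (by rw [ha]; intro h; rw [Sym2.eq_iff] at h; tauto)
    rw [ha] at this
    rw [ha, fp]; exact (key b hb1 hb2 this.symm).1
  · rw [ha, hb, fp, fq]; exact hxy.symm
  · rw [ha, hb] at hab; exact absurd hab (H.loopless.irrefl _)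
  · have := hCadj a b hab (by rw [ha]; intro h; rw [Sym2.eq_iff] at h; tauto)
    rw [ha, ← hC] at this
    rw [ha, fq]; exact (key b hb1 hb2 this.symm).2
  · have := hCadj a b hab (by rw [hb]; intro h; rw [Sym2.eq_iff] at h; tauto)
    rw [hb] at this
    rw [hb, fp]; exact (key a ha1 ha2 this).1.symm
  · have := hCadj a b hab (by rw [hb]; intro h; rw [Sym2.eq_iff] at h; tauto)
    rw [hb, ← hC] at this
    rw [hb, fq]; exact (key a ha1 ha2 this).2.symm
  · have := hCadj a b hab (by intro h; rw [Sym2.eq_iff] at h; tauto)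
    rw [fo a ha1 ha2, fo b hb1 hb2]
    exact hcomp _ _ this _ (hgB _ a).1 _ (hgB _ b).1

theorem find_pair {m k : ℕ} (hk : 2 ≤ k) (hm : 0 < m) (G : SimpleGraph (Fin m)) (Q : Finset (Fin m))
    (hQ : #Q = k + 1) (D β : ℝ)
    (hdeg : ∀ x ∈ Q, D * m ≤ #(univ.filter fun v => G.Adj x v))
    (hnum : (k : ℝ) * (k + 1) * β < (2 * k - 2) * (k + 1) * D - k * (k - 1)) :
    ∃ x ∈ Q, ∃ y ∈ Q, x ≠ y ∧ β * m ≤ #(univ.filter fun v => G.Adj x v ∧ G.Adj y v) := by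
  by_contra hcon
  push Not at hcon
  have hmR : (0 : ℝ) < m := by exact_mod_cast hm
  have hkR : (2 : ℝ) ≤ k := by exact_mod_cast hk
  set t : Fin m → Fin m → ℝ := fun x v => if G.Adj x v then 1 else 0 with ht
  set d : Fin m → ℝ := fun v => ∑ x ∈ Q, t x v with hd
  have htt : ∀ x v, t x v * t x v = t x v := fun x v => by simp only [ht]; split_ifs <;> simp
  set S : ℝ := ∑ v, d v with hS
  have hS1 : S = ∑ x ∈ Q, ∑ v, t x v := Finset.sum_comm
  have hS2 : (k + 1) * (D * m) ≤ S := by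
    have h := Finset.card_nsmul_le_sum Q (fun x => ∑ v, t x v) (D * m) (fun x hx => by
      have := hdeg x hx
      simp only [ht]
      rw [Finset.sum_boole]
      exact this)
    rw [hQ, nsmul_eq_mul] at h
    push_cast at h
    rw [hS1]; exact h
  have hint : ∀ v, 0 ≤ (d v - (k - 1)) * (d v - k) := by
    intro v
    have h1 : d v = ((#(Q.filter fun x => G.Adj x v) : ℕ) : ℝ) := by
      simp only [hd, ht]; rw [Finset.sum_boole]
    have h2 := prod_nonneg_int (#(Q.filter fun x => G.Adj x v)) (k - 1)
    rw [← h1, Nat.cast_sub (by omega)] at h2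
    push_cast at h2
    have h3 : d v - ((k : ℝ) - 1) - 1 = d v - k := by ring
    rwa [h3] at h2
  have hsq : ∑ v, d v ^ 2 = ∑ x ∈ Q, ∑ y ∈ Q, ∑ v, t x v * t y v := by
    have : ∀ v, d v ^ 2 = ∑ x ∈ Q, ∑ y ∈ Q, t x v * t y v := fun v => by
      rw [pow_two]; simp only [hd]; rw [Finset.sum_mul_sum]
    rw [Finset.sum_congr rfl fun v _ => this v, Finset.sum_comm]
    refine Finset.sum_congr rfl fun x _ => ?_
    rw [Finset.sum_comm]
  have hoff : ∀ x ∈ Q, ∑ y ∈ Q, ∑ v, t x v * t y v ≤ ∑ v, t x v + k * (β * m) := by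
    intro x hx
    rw [← Finset.add_sum_erase Q _ hx]
    simp only [htt]
    have h := Finset.sum_le_card_nsmul (Q.erase x) (fun y => ∑ v, t x v * t y v) (β * m) (fun y hy => by
      have hy' := Finset.mem_erase.1 hy
      refine le_trans (le_of_eq ?_) (hcon x hx y hy'.2 hy'.1.symm).le
      rw [← Finset.sum_boole]
      refine Finset.sum_congr rfl fun v _ => ?_
      simp only [ht]
      by_cases h1 : G.Adj x v <;> by_cases h2 : G.Adj y v <;> simp [h1, h2])
    rw [Finset.card_erase_of_mem hx, hQ, nsmul_eq_mul] at h
    simp only [Nat.add_sub_cancel] at h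
    linarith
  have hsq2 : ∑ v, d v ^ 2 ≤ S + (k + 1) * (k * (β * m)) := by
    rw [hsq, hS1]
    refine (Finset.sum_le_sum hoff).trans (le_of_eq ?_)
    rw [Finset.sum_add_distrib, Finset.sum_const, hQ, nsmul_eq_mul]
    push_cast; ring
  have hlow : 0 ≤ ∑ v, d v ^ 2 - (2 * k - 1) * S + k * (k - 1) * m := by
    have h1 := Finset.sum_nonneg fun v (_ : v ∈ univ) => hint v
    refine h1.trans (le_of_eq ?_)
    have : ∀ v, (d v - (k - 1)) * (d v - k) = d v ^ 2 - (2 * k - 1) * d v + k * (k - 1) := fun v => by ring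
    simp only [this]
    rw [Finset.sum_add_distrib, Finset.sum_sub_distrib, ← Finset.mul_sum, Finset.sum_const,
      Finset.card_univ, Fintype.card_fin, nsmul_eq_mul]
    ring
  have h1 : (2 * k - 2) * ((k + 1) * (D * m)) ≤ (2 * k - 2) * S :=
    mul_le_mul_of_nonneg_left hS2 (by linarith)
  have h2 := mul_lt_mul_of_pos_right hnum hmR
  linarith


theorem num1 (K t : ℝ) (hK : 2 ≤ K) (ht : K * t = 1) :
    K * (K + 1) * (1 - 2 * t + t ^ 2 / (K + 1)) <
      (2 * K - 2) * (K + 1) * (1 - t - t ^ 4 / 4) - K * (K - 1) := by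
  have h0 : K + 1 ≠ 0 := by linarith
  have ht0 : 0 < t := by
    by_contra h
    push Not at h
    nlinarith
  have ht2 : t ≤ 1 / 2 := by nlinarith
  have h1 : K * (K + 1) * (t ^ 2 / (K + 1)) = t := by
    have : K * (K + 1) * (t ^ 2 / (K + 1)) = (K * t) * t := by field_simp
    rw [this, ht, one_mul]
  have h2 : K * (K + 1) * (1 - 2 * t + t ^ 2 / (K + 1)) = K ^ 2 + K - 2 * K - 2 + t := by
    linear_combination h1 - 2 * (K + 1) * ht
  have h3 : (2 * K - 2) * (K + 1) * (1 - t - t ^ 4 / 4) - K * (K - 1) =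
      K ^ 2 + K - 2 - 2 * K + 2 * t - (t ^ 2 - t ^ 4) / 2 := by
    linear_combination (-2 * K - t ^ 2 * (K * t + 1) / 2) * ht
  rw [h2, h3]
  nlinarith [pow_pos ht0 4, mul_pos ht0 ht0]

theorem num2 (K t : ℝ) (hK : 2 ≤ K) (ht : K * t = 1) :
    (K - 2) * (t + t ^ 4 / 4) + t ^ 2 / (K + 1) / 2 ≤ 1 - 2 * t + t ^ 2 / (K + 1) := by
  have h0 : 0 < K + 1 := by linarith
  have ht0 : 0 < t := by
    by_contra h
    push Not at h
    nlinarith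
  have h1 : (K - 2) * (t + t ^ 4 / 4) ≤ 1 - 2 * t + t ^ 3 / 4 := by
    have : (K - 2) * (t + t ^ 4 / 4) = 1 - 2 * t + t ^ 3 / 4 - t ^ 4 / 2 := by
      linear_combination (1 + t ^ 3 / 4) * ht
    have := pow_pos ht0 4
    linarith
  have h2 : t ^ 3 / 4 ≤ t ^ 2 / (K + 1) / 2 := by
    rw [div_div, div_le_div_iff₀ (by norm_num) (by linarith)]
    have h3 : t ^ 3 * K = t ^ 2 := by linear_combination t ^ 2 * ht
    have h4 : t ≤ 1 / 2 := by nlinarith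
    have h5 : t ^ 3 ≤ t ^ 2 := by nlinarith [mul_pos ht0 ht0]
    linarith
  linarith

theorem num3 (K t : ℝ) (hK : 2 ≤ K) (ht : K * t = 1) :
    (K - 1) * (t + t ^ 4 / 4) + t / 2 ≤ 1 := by
  have ht0 : 0 < t := by
    by_contra h
    push Not at h
    nlinarith
  have : (K - 1) * (t + t ^ 4 / 4) = 1 - t + t ^ 3 / 4 - t ^ 4 / 4 := by
    linear_combination (1 + t ^ 3 / 4) * ht
  have h4 : t ≤ 1 / 2 := by nlinarith
  have h5 : t ^ 3 ≤ t := by nlinarith [mul_pos ht0 ht0]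
  have := pow_pos ht0 4
  linarith

theorem num4 (K t m : ℝ) (hK : 2 ≤ K) (ht : K * t = 1) (hm : 0 < m) :
    (3 * K - 4) * m < (1 - t - t ^ 4 / 4) * m * (3 * K - 1) := by
  have ht0 : 0 < t := by
    by_contra h
    push Not at h
    nlinarith
  have h4 : t ≤ 1 / 2 := by nlinarith
  have h5 : t ^ 3 ≤ t := by nlinarith [mul_pos ht0 ht0]
  have := pow_pos ht0 4
  have : (3 * K - 4) < (1 - t - t ^ 4 / 4) * (3 * K - 1) := by
    have : (1 - t - t ^ 4 / 4) * (3 * K - 1) = 3 * K - 4 + t - 3 / 4 * t ^ 3 + t ^ 4 / 4 := by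
      linear_combination (-3 - 3 / 4 * t ^ 3) * ht
    linarith
  nlinarith

theorem comb {V : Type*} [Fintype V] (H : SimpleGraph V) {k : ℕ} (hk : 2 ≤ k) (p q : V)
    (C : (H.deleteEdges {s(p, q)}).Coloring (Fin k)) (hC : C p = C q) (hpq : p ≠ q) :
    ∃ N : ℕ, ∀ m : ℕ, N ≤ m → ∀ G : SimpleGraph (Fin m), ¬ Contains G H →
      (∀ v, (1 - 1 / (k : ℝ) - (1 / (k : ℝ)) ^ 4 / 4) * m ≤ #(univ.filter fun w => G.Adj v w)) →
      G.Colorable k := by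
  have hkR : (2 : ℝ) ≤ k := by exact_mod_cast hk
  set t : ℝ := 1 / (k : ℝ) with ht
  have hkt : (k : ℝ) * t = 1 := by rw [ht]; field_simp
  have ht0 : 0 < t := by positivity
  set κ := t + t ^ 4 / 4 with hκ
  have hκ0 : 0 ≤ κ := by positivity
  obtain ⟨T', N1, hTT, h1⟩ := grow_step (k - 1) (Fintype.card V + 2) κ (t / 2) hκ0 (by positivity)
  obtain ⟨N2, h2⟩ := grow ((univ : Finset (Fin k)).erase (C p)) (k - 2) κ (t ^ 2 / (k + 1) / 2) hκ0
    (by positivity) (by rw [Finset.card_erase_of_mem (mem_univ _), Finset.card_univ, Fintype.card_fin]; omega) T'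
  refine ⟨max (max N1 N2) 1, fun m hm G hG hdeg => ?_⟩
  have hm0 : 0 < m := by omega
  have hmR : (0 : ℝ) < m := by exact_mod_cast hm0
  have hnon : ∀ a, (#(univ.filter fun v => ¬ G.Adj a v) : ℝ) ≤ κ * m := by
    intro a
    have h5 := Finset.card_filter_add_card_filter_not (s := (univ : Finset (Fin m)))
      (fun w => G.Adj a w)
    rw [Finset.card_univ, Fintype.card_fin] at h5
    have h6 : (#(univ.filter fun v => G.Adj a v) : ℝ) + #(univ.filter fun v => ¬ G.Adj a v) = m := by
      exact_mod_cast h5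
    have := hdeg a
    rw [hκ]
    linarith
  have hfree : G.CliqueFree (k + 1) := by
    intro Q hQ
    obtain ⟨x, hx, y, hy, hxy, hW⟩ := find_pair hk hm0 G Q hQ.card_eq _ _ (fun x _ => hdeg x)
      (num1 k t hkR hkt)
    obtain ⟨B, hB, hBW, hcomp⟩ := h2 m (by omega) G _ hnon (by
      refine le_trans ?_ hW
      rw [Nat.cast_sub hk]
      exact mul_le_mul_of_nonneg_right (num2 k t hkR hkt) hmR.le)
    obtain ⟨B', hB1, hB2, hB3, hB4⟩ := extend G _ (C p) (Finset.notMem_erase _ _) univ B _ T' (k - 1)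
      (κ * m) (by rw [Finset.card_erase_of_mem (mem_univ _), Finset.card_univ, Fintype.card_fin])
      (by positivity) hnon hB hcomp hTT (by
        refine (h1 m (by omega)).trans ?_
        rw [Nat.cast_sub (by omega), Finset.card_univ, Fintype.card_fin]
        have := mul_le_mul_of_nonneg_right (num3 k t hkR hkt) hmR.le
        rw [one_mul] at this
        exact_mod_cast this)
    rw [Finset.insert_erase (mem_univ _)] at hB3 hB4
    apply hG
    refine embed H p q C hC hpq G x y (hQ.isClique hx hy hxy) B' (fun i => (hB3 i (mem_univ _)).ge)
      (fun i i' => hB4 i (mem_univ _) i' (mem_univ _)) (fun i hi b hb => ?_)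
    have hi' : i ∈ (univ : Finset (Fin k)).erase (C p) := Finset.mem_erase.2 ⟨hi, mem_univ _⟩
    exact (Finset.mem_filter.1 (hBW i hi' (hB1 i hi' hb))).2
  have : Nonempty (Fin m) := ⟨⟨0, hm0⟩⟩
  refine SimpleGraph.colorable_of_cliqueFree_lt_minDegree hfree ?_
  obtain ⟨v, hv⟩ := G.exists_minimal_degree_vertex
  rw [hv, Nat.div_lt_iff_lt_mul (by omega)]
  have h3 : (#(univ.filter fun w => G.Adj v w)) = G.degree v := by
    rw [← SimpleGraph.card_neighborFinset_eq_degree, SimpleGraph.neighborFinset_eq_filter]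
  have h4 := hdeg v
  rw [h3] at h4
  have h5 : ((3 * k - 4 : ℕ) : ℝ) * m < G.degree v * ((3 * k - 1 : ℕ) : ℝ) := by
    rw [Nat.cast_sub (by omega), Nat.cast_sub (by omega)]
    push_cast
    refine (num4 k t m hkR hkt hmR).trans_le ?_
    exact mul_le_mul_of_nonneg_right h4 (by linarith)
  simp only [Fintype.card_fin]
  exact_mod_cast h5


theorem descend {V : Type*} [Fintype V] (H : SimpleGraph V) {k : ℕ} (hk : 2 ≤ k) (p q : V)
    (C : (H.deleteEdges {s(p, q)}).Coloring (Fin k)) (hC : C p = C q) (hpq : p ≠ q) :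
    ∃ N : ℕ, ∀ m : ℕ, N ≤ m → ∀ G : SimpleGraph (Fin (m + 1)), ¬ Contains G H → ∀ a : ℝ,
      adjSpectralRadius G = a * (m + 1 : ℕ) →
      1 - 1 / (k : ℝ) - (1 / (k : ℝ)) ^ 4 / 8 ≤ a → ¬ G.Colorable k →
      ∃ G' : SimpleGraph (Fin m), ¬ Contains G' H ∧
        a * m + (1 / (k : ℝ)) ^ 4 / 512 ≤ adjSpectralRadius G' := by
  obtain ⟨N, hN⟩ := comb H hk p q C hC hpq
  have hkR : (2 : ℝ) ≤ k := by exact_mod_cast hk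
  set t : ℝ := 1 / (k : ℝ) with ht
  have ht0 : 0 < t := by positivity
  have ht2 : t ≤ 1 / 2 := by
    rw [ht]; gcongr
  have ht4 : t ^ 4 ≤ 1 := pow_le_one₀ ht0.le (by linarith)
  obtain ⟨N2, hN2⟩ := exists_nat_ge (16 / (t ^ 4 / 8))
  refine ⟨max N N2, fun m hm G hG a ha hca hcol => ?_⟩
  have h1 : ¬ ∀ v, (1 - t - t ^ 4 / 4) * (m + 1 : ℕ) ≤ #(univ.filter fun w => G.Adj v w) :=
    fun h => hcol (hN (m + 1) (by omega) G hG h)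
  push Not at h1
  obtain ⟨v, hv⟩ := h1
  have hmN : (N2 : ℝ) ≤ m := by
    have : N2 ≤ m := by omega
    exact_mod_cast this
  obtain ⟨u, hu⟩ := step G a (t ^ 4 / 8) ha (by linarith) (by positivity) (by linarith)
    (hN2.trans hmN) v (by
      refine hv.le.trans ?_
      exact mul_le_mul_of_nonneg_right (by linarith) (Nat.cast_nonneg _))
  refine ⟨G.comap u.succAbove, ?_, by linarith⟩
  rintro ⟨f, hf⟩
  exact hG ⟨f.trans u.succAboveEmb, fun x y hxy => hf x y hxy⟩

theorem iter {V : Type*} (H : SimpleGraph V) (c γ : ℝ) (hγ : 0 < γ) (N : ℕ) (hN : 1 ≤ N)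
    (hstep : ∀ m : ℕ, N ≤ m → ∀ G : SimpleGraph (Fin (m + 1)), ¬ Contains G H → ∀ a : ℝ,
      adjSpectralRadius G = a * (m + 1 : ℕ) → c < a →
      ∃ G' : SimpleGraph (Fin m), ¬ Contains G' H ∧ a * m + γ ≤ adjSpectralRadius G') :
    ∀ j : ℕ, ∀ G : SimpleGraph (Fin (N + j)), ¬ Contains G H → ∀ a : ℝ,
      adjSpectralRadius G = a * (N + j : ℕ) → c < a →
      a + γ / N * ∑ i ∈ range j, (1 / ((i : ℝ) + 1)) ≤ 1 := by
  have hNR : (1 : ℝ) ≤ N := by exact_mod_cast hN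
  intro j
  induction j with
  | zero =>
    intro G _ a ha _
    have h := rho_le (n := N + 0) (by omega) G
    rw [ha] at h
    have h2 : (0 : ℝ) < ((N + 0 : ℕ) : ℝ) := by push_cast; linarith
    simp only [Finset.range_zero, Finset.sum_empty, mul_zero, add_zero]
    by_contra h3
    push Not at h3
    nlinarith
  | succ j ih =>
    intro G hG a ha hca
    obtain ⟨G', hG', hr⟩ := hstep (N + j) (by omega) G hG a ha hca
    have hpos : (0 : ℝ) < ((N + j : ℕ) : ℝ) := by push_cast; positivity
    set M : ℝ := ((N + j : ℕ) : ℝ) with hM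
    have h1 : a + γ / M ≤ adjSpectralRadius G' / M := by
      rw [le_div_iff₀ hpos, add_mul, div_mul_cancel₀ _ hpos.ne']
      exact hr
    have hγM : 0 < γ / M := by positivity
    have h2 := ih G' hG' (adjSpectralRadius G' / M) (by rw [div_mul_cancel₀ _ hpos.ne']) (by linarith)
    rw [Finset.sum_range_succ, mul_add]
    have h3 : γ / N * (1 / ((j : ℝ) + 1)) ≤ γ / M := by
      rw [div_mul_div_comm, mul_one]
      have : M ≤ N * ((j : ℝ) + 1) := by
        rw [hM]; push_cast
        nlinarith [Nat.cast_nonneg (α := ℝ) j]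
      gcongr
    linarith

theorem asym {V : Type*} [Fintype V] (H : SimpleGraph V) {k : ℕ} (hk : 2 ≤ k) (p q : V)
    (C : (H.deleteEdges {s(p, q)}).Coloring (Fin k)) (hC : C p = C q) (hpq : p ≠ q) :
    ∃ N : ℕ, ∀ m : ℕ, N ≤ m → ∀ G : SimpleGraph (Fin m), ¬ Contains G H →
      adjSpectralRadius G ≤ (1 - 1 / (k : ℝ)) * m := by
  obtain ⟨N, hN⟩ := descend H hk p q C hC hpq
  have hkR : (2 : ℝ) ≤ k := by exact_mod_cast hk
  set N' := max N (2 * k) with hN'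
  have hN'1 : 1 ≤ N' := by omega
  have hit := iter H (1 - 1 / (k : ℝ)) ((1 / (k : ℝ)) ^ 4 / 512) (by positivity) N' hN'1 (by
    intro m hm G hG a ha hca
    refine hN m (by omega) G hG a ha ?_ ?_
    · have : 0 < (1 / (k : ℝ)) ^ 4 / 8 := by positivity
      linarith
    · intro hcol
      obtain ⟨-, -, h3, h4⟩ := turan_facts (n := m + 1) hk (by omega)
      have h5 := (h4 G hcol).1.trans h3
      rw [ha] at h5
      have h6 : (0 : ℝ) < (m + 1 : ℕ) := by positivity
      exact absurd (le_of_mul_le_mul_right h5 h6) (not_le.2 hca))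
  have hγ : 0 < (1 / (k : ℝ)) ^ 4 / 512 / N' := by
    have : (0 : ℝ) < N' := by exact_mod_cast hN'1
    positivity
  obtain ⟨J, hJ⟩ := Filter.eventually_atTop.1
    (Real.tendsto_sum_range_one_div_nat_succ_atTop.eventually_gt_atTop
      (1 / ((1 / (k : ℝ)) ^ 4 / 512 / N')))
  refine ⟨N' + J, fun m hm G hG => ?_⟩
  obtain ⟨j, rfl⟩ : ∃ j, m = N' + j := ⟨m - N', by omega⟩
  by_contra hcon
  push Not at hcon
  have hpos : (0 : ℝ) < ((N' + j : ℕ) : ℝ) := by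
    have : 0 < N' + j := by omega
    exact_mod_cast this
  have hca : 1 - 1 / (k : ℝ) < adjSpectralRadius G / ((N' + j : ℕ) : ℝ) := by
    rw [lt_div_iff₀ hpos]; exact hcon
  have h1 := hit j G hG (adjSpectralRadius G / ((N' + j : ℕ) : ℝ))
    (by rw [div_mul_cancel₀ _ hpos.ne']) hca
  have h2 := hJ j (by omega)
  rw [div_lt_iff₀ hγ] at h2
  have h3 : 1 / (k : ℝ) ≤ 1 / 2 := by gcongr
  linarith

theorem main_two {V : Type*} [Fintype V] (H : SimpleGraph V) {k : ℕ} (hk : 2 ≤ k) (p q : V)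
    (C : (H.deleteEdges {s(p, q)}).Coloring (Fin k)) (hC : C p = C q) (hpq : p ≠ q) :
    ∃ n₀ : ℕ, ∀ n : ℕ, n₀ ≤ n → ∀ G : SimpleGraph (Fin n), ¬ Contains G H →
      adjSpectralRadius G ≤ adjSpectralRadius (turanGraph n k) ∧
      (adjSpectralRadius G = adjSpectralRadius (turanGraph n k) ↔
        Nonempty (G ≃g turanGraph n k)) := by
  obtain ⟨N1, h1⟩ := descend H hk p q C hC hpq
  obtain ⟨N2, h2⟩ := asym H hk p q C hC hpq
  have hkR : (2 : ℝ) ≤ k := by exact_mod_cast hk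
  set t : ℝ := 1 / (k : ℝ) with ht
  have ht0 : 0 < t := by positivity
  obtain ⟨N3, h3⟩ := exists_nat_gt (k / (t ^ 4 / 512))
  refine ⟨N1 + N2 + N3 + 2 * k + 1, fun n hn G hG => ?_⟩
  obtain ⟨m, rfl⟩ : ∃ m, n = m + 1 := ⟨n - 1, by omega⟩
  obtain ⟨f1, -, f3, f4⟩ := turan_facts (n := m + 1) hk (by omega)
  have hiso : Nonempty (G ≃g turanGraph (m + 1) k) →
      adjSpectralRadius G = adjSpectralRadius (turanGraph (m + 1) k) :=
    fun ⟨e⟩ => le_antisymm (rho_iso e) (rho_iso e.symm)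
  by_cases hcol : G.Colorable k
  · exact ⟨(f4 G hcol).1, (f4 G hcol).2, hiso⟩
  have key : adjSpectralRadius G < adjSpectralRadius (turanGraph (m + 1) k) := by
    by_contra hcon
    push Not at hcon
    have hlow := f1.trans hcon
    have hm0 : (0 : ℝ) ≤ m := Nat.cast_nonneg m
    have hnpos : (0 : ℝ) < ((m + 1 : ℕ) : ℝ) := by positivity
    have hN3 : (N3 : ℝ) ≤ m := by
      have : N3 ≤ m := by omega
      exact_mod_cast this
    have hkn : (k : ℝ) < t ^ 4 / 512 * ((m + 1 : ℕ) : ℝ) := by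
      rw [div_lt_iff₀ (by positivity)] at h3
      push_cast
      have : (N3 : ℝ) * (t ^ 4 / 512) ≤ m * (t ^ 4 / 512) := by gcongr
      have : 0 < t ^ 4 / 512 := by positivity
      linarith
    have hkn2 : (k : ℝ) / ((m + 1 : ℕ) : ℝ) < t ^ 4 / 512 := by
      rw [div_lt_iff₀ hnpos]; exact hkn
    have hn1 : (1 : ℝ) ≤ ((m + 1 : ℕ) : ℝ) := by push_cast; linarith
    set r : ℝ := (k : ℝ) / ((m + 1 : ℕ) : ℝ) with hr
    have hr0 : 0 ≤ r := by positivity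
    have ha : 1 - t - r / ((m + 1 : ℕ) : ℝ) ≤ adjSpectralRadius G / ((m + 1 : ℕ) : ℝ) := by
      rw [le_div_iff₀ hnpos, sub_mul, div_mul_cancel₀ _ hnpos.ne']
      exact hlow
    have hrr : r / ((m + 1 : ℕ) : ℝ) ≤ r := div_le_self hr0 hn1
    have ht4 : 0 < t ^ 4 := by positivity
    obtain ⟨G', hG', hr'⟩ := h1 m (by omega) G hG (adjSpectralRadius G / ((m + 1 : ℕ) : ℝ))
      (by rw [div_mul_cancel₀ _ hnpos.ne']) (by linarith) hcol
    have h5 := h2 m (by omega) G' hG'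
    have h6 := mul_le_mul_of_nonneg_right ha hm0
    have h7 : r / ((m + 1 : ℕ) : ℝ) * m ≤ r := by
      rw [div_mul_eq_mul_div, div_le_iff₀ hnpos]
      push_cast
      linarith
    linarith
  exact ⟨key.le, fun h => absurd h key.ne, hiso⟩

theorem main_one {V : Type*} [Fintype V] (H : SimpleGraph V) (p q : V)
    (C : (H.deleteEdges {s(p, q)}).Coloring (Fin 1)) (hpq : p ≠ q) :
    ∃ n₀ : ℕ, ∀ n : ℕ, n₀ ≤ n → ∀ G : SimpleGraph (Fin n), ¬ Contains G H →
      adjSpectralRadius G ≤ adjSpectralRadius (turanGraph n 1) ∧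
      (adjSpectralRadius G = adjSpectralRadius (turanGraph n 1) ↔
        Nonempty (G ≃g turanGraph n 1)) := by
  refine ⟨Fintype.card V + 2, fun n hn G hG => ?_⟩
  have hG0 : G = turanGraph n 1 := by
    ext x y
    constructor
    · intro hxy
      exact absurd (embed H p q C (Subsingleton.elim _ _) hpq G x y hxy (fun _ => univ)
        (fun i => by rw [Finset.card_univ, Fintype.card_fin]; exact hn)
        (fun i i' h => absurd (Subsingleton.elim _ _) h)
        (fun i h => absurd (Subsingleton.elim _ _) h)) hG
    · intro h
      exact absurd h (by simp [turanGraph, Nat.mod_one])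
  rw [hG0]
  exact ⟨le_refl _, fun _ => ⟨SimpleGraph.Iso.refl⟩, fun _ => rfl⟩


end Crit

/-- Spectral chromatic critical edge theorem (Nikiforov / Theorem 1.2):
if `H` has chromatic number `k+1` and a color critical edge, then for all large `n`
the Turán graph `T_{n,k}` is the unique spectral extremal `H`-free graph. -/
theorem stmt0 {V : Type*} [Fintype V] (H : SimpleGraph V) (k : ℕ) (hk : 1 ≤ k)
    (hchrom : H.chromaticNumber = (k + 1 : ℕ))
    (hcrit : ∃ e ∈ H.edgeSet, (H.deleteEdges {e}).chromaticNumber = (k : ℕ)) :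
    ∃ n₀ : ℕ, ∀ n : ℕ, n₀ ≤ n → ∀ G : SimpleGraph (Fin n), ¬ Contains G H →
      adjSpectralRadius G ≤ adjSpectralRadius (turanGraph n k) ∧
      (adjSpectralRadius G = adjSpectralRadius (turanGraph n k) ↔
        Nonempty (G ≃g turanGraph n k)) := by
  obtain ⟨e, he, hchi⟩ := hcrit
  induction e using Sym2.ind with
  | _ p q =>
  rw [SimpleGraph.mem_edgeSet] at he
  have hcol : (H.deleteEdges {s(p, q)}).Colorable k :=
    SimpleGraph.chromaticNumber_le_iff_colorable.1 hchi.le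
  obtain ⟨C⟩ := hcol
  have hC : C p = C q := by
    by_contra hne
    have hH : H.Colorable k := by
      refine ⟨SimpleGraph.Coloring.mk C ?_⟩
      intro a b hab
      by_cases h : s(a, b) = s(p, q)
      · rw [Sym2.eq_iff] at h
        rcases h with ⟨rfl, rfl⟩ | ⟨rfl, rfl⟩
        · exact hne
        · exact fun h => hne h.symm
      · apply C.valid
        rw [SimpleGraph.deleteEdges_adj]
        exact ⟨hab, by simpa using h⟩
    have := SimpleGraph.chromaticNumber_le_iff_colorable.2 hH
    rw [hchrom] at this
    have h2 : k + 1 ≤ k := by exact_mod_cast this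
    omega
  rcases Nat.lt_or_ge k 2 with h | h
  · obtain rfl : k = 1 := by omega
    exact Crit.main_one H p q C he.ne
  · exact Crit.main_two H h p q C hC he.ne
end

section
/- Let r ≥ 1 and let n be an integer with n ≥ (13/2)r (i.e., 2n ≥ 13r). If G is a B_{r+1}-free graph on n vertices, then ρ(G) ≤ ρ(T_{n,2}), with equality if and only if G is isomorphic to the Turán graph T_{n,2}. -/
open SimpleGraph Finset

attribute [local instance] Classical.propDecidable

lemma codeg_le {n r : ℕ} (G : SimpleGraph (Fin n)) (hfree : ¬ Contains G (book (r + 1)))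
    (u v : Fin n) (huv : G.Adj u v) :
    (univ.filter fun w => G.Adj u w ∧ G.Adj v w).card ≤ r := by
  by_contra hcon
  push Not at hcon
  apply hfree
  obtain ⟨S, hS, hSc⟩ := Finset.exists_subset_card_eq (Nat.succ_le_of_lt hcon)
  let e := S.equivFinOfCardEq hSc
  have hmem : ∀ i, G.Adj u (e.symm i : Fin n) ∧ G.Adj v (e.symm i : Fin n) := fun i => by
    have := hS (e.symm i).2
    simpa using this
  let f : Fin 2 ⊕ Fin (r + 1) → Fin n := Sum.elim ![u, v] (fun i => (e.symm i : Fin n))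
  have h0 : f (Sum.inl 0) = u := rfl
  have h1 : f (Sum.inl 1) = v := rfl
  have h2 : ∀ i, f (Sum.inr i) = (e.symm i : Fin n) := fun i => rfl
  have hadj : ∀ a b, (book (r + 1)).Adj a b → G.Adj (f a) (f b) := by
    intro a b hab
    simp only [book, SimpleGraph.fromRel_adj] at hab
    obtain ⟨hne, hab⟩ := hab
    rcases a with a | a <;> rcases b with b | b
    · fin_cases a <;> fin_cases b
      · exact absurd rfl hne
      · exact huv
      · exact huv.symm
      · exact absurd rfl hne
    · fin_cases a
      · exact (hmem b).1
      · exact (hmem b).2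
    · fin_cases b
      · exact (hmem a).1.symm
      · exact (hmem a).2.symm
    · simp at hab
  have hinj : Function.Injective f := by
    intro a b hab
    by_contra hne
    by_cases hl : (book (r + 1)).Adj a b
    · exact (hadj a b hl).ne hab
    · rcases a with a | a
      · exact hl (by simp [book, hne])
      · rcases b with b | b
        · exact hl (by simp [book])
        · apply hne
          rw [h2, h2] at hab
          rw [e.symm.injective (Subtype.ext hab)]
  exact ⟨⟨f, hinj⟩, hadj⟩

lemma numeric1 (ρ a b n r : ℝ) (ha : 0 ≤ a) (hab : a + b = n) (hn : 0 < n) (hr : 0 ≤ r)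
    (hb : 0 ≤ b) (hρ : 0.494 * n ≤ ρ) (hrn : 7 * r ≤ n) :
    a * r * (3 * r + b) < ρ * (2 * ρ ^ 2 - a * b - a * r) := by
  have h1 : a * r * (3 * r + b) ≤ a * (n / 7) * (3 * (n / 7) + b) := by
    gcongr <;> linarith
  have h2 : a * r ≤ a * (n / 7) := by gcongr; linarith
  have h3 : (0.494 * n) ^ 2 ≤ ρ ^ 2 := by gcongr
  have h4 : 2 * (0.494 * n) ^ 2 - a * b - a * (n / 7) ≤ 2 * ρ ^ 2 - a * b - a * r := by linarith
  have h5 : 0 < 2 * (0.494 * n) ^ 2 - a * b - a * (n / 7) := by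
    subst hab; nlinarith [sq_nonneg (a - b), mul_nonneg ha hb, sq_nonneg (a - 1.3 * b)]
  have h6 : (0.494 * n) * (2 * (0.494 * n) ^ 2 - a * b - a * (n / 7)) ≤
      ρ * (2 * ρ ^ 2 - a * b - a * r) :=
    mul_le_mul hρ h4 h5.le (by nlinarith)
  refine h1.trans_lt (lt_of_lt_of_le ?_ h6)
  have h7 : 0 < 0.494 * (2 * (0.494 * n) ^ 2 - a * b - a * (n / 7))
      - a * (1 / 7) * (3 * (n / 7) + b) := by
    obtain rfl : b = n - a := by linarith
    nlinarith [sq_nonneg (a - 0.61 * n), mul_pos hn hn]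
  nlinarith [mul_pos hn h7]

lemma numeric2 (ρ a b n r : ℝ) (ha : 0 ≤ a) (hab : a + b = n) (hn : 0 < n) (hr : 0 ≤ r)
    (hb : 0 ≤ b) (hρ : 0.4985 * n ≤ ρ) (hrn : 13 * r ≤ 2 * n) :
    a * r * (3 * r + b) < ρ * (2 * ρ ^ 2 - a * b - a * r) := by
  have h1 : a * r * (3 * r + b) ≤ a * (2 * n / 13) * (3 * (2 * n / 13) + b) := by
    gcongr <;> linarith
  have h2 : a * r ≤ a * (2 * n / 13) := by gcongr; linarith
  have h3 : (0.4985 * n) ^ 2 ≤ ρ ^ 2 := by gcongr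
  have h4 : 2 * (0.4985 * n) ^ 2 - a * b - a * (2 * n / 13) ≤ 2 * ρ ^ 2 - a * b - a * r := by
    linarith
  have h5 : 0 < 2 * (0.4985 * n) ^ 2 - a * b - a * (2 * n / 13) := by
    obtain rfl : b = n - a := by linarith
    nlinarith [sq_nonneg (a - 0.577 * n), mul_pos hn hn]
  have h6 : (0.4985 * n) * (2 * (0.4985 * n) ^ 2 - a * b - a * (2 * n / 13)) ≤
      ρ * (2 * ρ ^ 2 - a * b - a * r) :=
    mul_le_mul hρ h4 h5.le (by nlinarith)
  refine h1.trans_lt (lt_of_lt_of_le ?_ h6)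
  have h7 : 0 < 0.4985 * (2 * (0.4985 * n) ^ 2 - a * b - a * (2 * n / 13))
      - a * (2 / 13) * (3 * (2 * n / 13) + b) := by
    obtain rfl : b = n - a := by linarith
    nlinarith [sq_nonneg (a - 0.613 * n), mul_pos hn hn]
  nlinarith [mul_pos hn h7]

lemma numeric (ρ : ℝ) (a b n r : ℕ) (hab : a + b = n) (hr : 1 ≤ r)
    (hρ0 : 0 ≤ ρ) (hρ : (n : ℝ) ^ 2 - 1 ≤ 4 * ρ ^ 2) (hrn : 13 * r ≤ 2 * n) :
    (a : ℝ) * r * (3 * r + b) < ρ * (2 * ρ ^ 2 - a * b - a * r) := by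
  have hn7 : 7 ≤ n := by omega
  have hab' : (a : ℝ) + b = n := by exact_mod_cast hab
  rcases le_or_gt 13 n with h | h
  · have h' : (13 : ℝ) ≤ n := by exact_mod_cast h
    refine numeric2 ρ a b n r (by positivity) hab' (by linarith) (by positivity) (by positivity)
      ?_ (by exact_mod_cast hrn)
    apply le_of_sq_le_sq _ hρ0
    nlinarith
  · have h' : (7 : ℝ) ≤ n := by exact_mod_cast hn7
    refine numeric1 ρ a b n r (by positivity) hab' (by linarith) (by positivity) (by positivity)
      ?_ (by have : 7 * r ≤ n := by omega
             exact_mod_cast this)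
    apply le_of_sq_le_sq _ hρ0
    nlinarith

set_option maxHeartbeats 2000000 in
lemma core {n r : ℕ} (hr : 1 ≤ r) (hn : 13 * r ≤ 2 * n) (G : SimpleGraph (Fin n))
    (hco : ∀ u v, G.Adj u v → (univ.filter fun w => G.Adj u w ∧ G.Adj v w).card ≤ r)
    (ρ : ℝ) (hρ0 : 0 ≤ ρ) (hρ : ((n ^ 2 / 4 : ℕ) : ℝ) ≤ ρ ^ 2)
    (x : Fin n → ℝ) (hx0 : ∀ v, 0 ≤ x v) (hx1 : ∀ v, x v ≤ 1) (u : Fin n) (hu : x u = 1)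
    (hx : ∀ v, ρ * x v ≤ ∑ w, (if G.Adj v w then (1 : ℝ) else 0) * x w) :
    ∃ A : Finset (Fin n), A.card * (n - A.card) = n ^ 2 / 4 ∧
      ∀ v w, G.Adj v w ↔ ¬ (v ∈ A ↔ w ∈ A) := by
  set c : Fin n → Fin n → ℝ := fun v w => if G.Adj v w then (1 : ℝ) else 0 with hc
  have hc0 : ∀ v w, 0 ≤ c v w := fun v w => by simp only [hc]; split_ifs <;> norm_num
  have hc1 : ∀ v w, c v w ≤ 1 := fun v w => by simp only [hc]; split_ifs <;> norm_num
  have hcs : ∀ v w, c v w = c w v := fun v w => by simp only [hc, G.adj_comm]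
  set A : Finset (Fin n) := univ.filter (fun w => G.Adj u w) with hA
  set B : Finset (Fin n) := univ.filter (fun w => ¬ G.Adj u w) with hB
  have hsplit : ∀ f : Fin n → ℝ, ∑ w, f w = ∑ w ∈ A, f w + ∑ w ∈ B, f w := fun f =>
    (Finset.sum_filter_add_sum_filter_not univ (fun w => G.Adj u w) f).symm
  have hcard : A.card + B.card = n := by
    have := Finset.card_filter_add_card_filter_not (s := (univ : Finset (Fin n)))
      (fun w => G.Adj u w)
    simpa using this
  set a := A.card with ha
  set b := B.card with hb
  have hmod : n ^ 2 ≤ 4 * (n ^ 2 / 4) + 1 := by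
    have : n ^ 2 % 4 ≤ 1 := by
      rcases Nat.even_or_odd' n with ⟨k, rfl | rfl⟩
      · have : (2 * k) ^ 2 = 4 * k ^ 2 := by ring
        omega
      · have : (2 * k + 1) ^ 2 = 4 * (k ^ 2 + k) + 1 := by ring
        omega
    omega
  have habn : a * b ≤ n ^ 2 / 4 := by
    rw [Nat.le_div_iff_mul_le (by norm_num), ← hcard]
    zify
    nlinarith [sq_nonneg ((a : ℤ) - b)]
  have hab : (a : ℝ) * b ≤ ρ ^ 2 := le_trans (by exact_mod_cast habn) hρ
  have hρn : (n : ℝ) ^ 2 - 1 ≤ 4 * ρ ^ 2 := by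
    have : (n : ℝ) ^ 2 ≤ 4 * ((n ^ 2 / 4 : ℕ) : ℝ) + 1 := by exact_mod_cast hmod
    linarith
  have hrR : (1 : ℝ) ≤ r := by exact_mod_cast hr
  have hnR : 13 * (r : ℝ) ≤ 2 * n := by exact_mod_cast hn
  have hρr : (r : ℝ) < ρ := by
    apply lt_of_pow_lt_pow_left₀ 2 hρ0
    nlinarith
  have hρpos : 0 < ρ := by linarith
  set dA : Fin n → ℝ := fun v => ∑ w ∈ A, c v w with hdA
  set dB : Fin n → ℝ := fun v => ∑ w ∈ B, c v w with hdB
  have hdA0 : ∀ v, 0 ≤ dA v := fun v => Finset.sum_nonneg fun w _ => hc0 v w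
  have hdBb : ∀ v, dB v ≤ b := fun v => by
    calc dB v ≤ ∑ w ∈ B, (1 : ℝ) := Finset.sum_le_sum fun w _ => hc1 v w
      _ = b := by simp [hb]
  have hprod : ∀ v w z, c v z * c w z = if G.Adj v z ∧ G.Adj w z then (1 : ℝ) else 0 := by
    intro v w z
    simp only [hc]
    by_cases h1 : G.Adj v z <;> by_cases h2 : G.Adj w z <;> simp [h1, h2]
  have hcoR : ∀ v w, G.Adj v w → ∑ z, c v z * c w z ≤ r := by
    intro v w hvw
    simp only [hprod]
    rw [Finset.sum_boole]
    exact_mod_cast hco v w hvw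
  have huA : ∀ w ∈ A, c u w = 1 := fun w hw => by
    have : G.Adj u w := by simpa [hA] using hw
    simp [hc, this]
  have huB : ∀ w ∈ B, c u w = 0 := fun w hw => by
    have : ¬ G.Adj u w := by simpa [hB] using hw
    simp [hc, this]
  have hdAr : ∀ v ∈ A, dA v ≤ r := by
    intro v hv
    have huv : G.Adj u v := by simpa [hA] using hv
    refine le_trans ?_ (hcoR u v huv)
    rw [hsplit]
    have h1 : ∑ w ∈ A, c u w * c v w = dA v :=
      Finset.sum_congr rfl fun w hw => by rw [huA w hw, one_mul]
    have h2 : 0 ≤ ∑ w ∈ B, c u w * c v w :=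
      Finset.sum_nonneg fun w _ => mul_nonneg (hc0 _ _) (hc0 _ _)
    linarith
  -- pairs
  have hpair : ∀ v ∈ A, ∀ w ∈ A, c v w * (dB v + dB w) ≤ c v w * (b + r) := by
    intro v hv w hw
    by_cases hvw : G.Adj v w
    · have h1 : c v w = 1 := by simp [hc, hvw]
      rw [h1, one_mul, one_mul]
      have h2 := hcoR v w hvw
      rw [hsplit] at h2
      have h3 : 0 ≤ ∑ z ∈ A, c v z * c w z :=
        Finset.sum_nonneg fun z _ => mul_nonneg (hc0 _ _) (hc0 _ _)
      have h4 : dB v + dB w ≤ ∑ z ∈ B, (1 + c v z * c w z) := by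
        simp only [hdB]
        rw [← Finset.sum_add_distrib]
        refine Finset.sum_le_sum fun z _ => ?_
        nlinarith [mul_nonneg (sub_nonneg.2 (hc1 v z)) (sub_nonneg.2 (hc1 w z))]
      rw [Finset.sum_add_distrib] at h4
      have h5 : ∑ z ∈ B, (1 : ℝ) = b := by simp [hb]
      linarith
    · have h1 : c v w = 0 := by simp [hc, hvw]
      simp [h1]
  set D : ℝ := ∑ v ∈ A, dA v with hD
  have hD0 : 0 ≤ D := Finset.sum_nonneg fun v _ => hdA0 v
  have hDr : D ≤ r * a := by
    calc D ≤ ∑ v ∈ A, (r : ℝ) := Finset.sum_le_sum hdAr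
      _ = r * a := by simp [ha, mul_comm]
  -- P = sum dA * dB
  set P : ℝ := ∑ v ∈ A, dA v * dB v with hP
  have hP2 : 2 * P ≤ D * (b + r) := by
    have h1 : ∑ v ∈ A, ∑ w ∈ A, c v w * (dB v + dB w) ≤ ∑ v ∈ A, ∑ w ∈ A, c v w * (b + r) :=
      Finset.sum_le_sum fun v hv => Finset.sum_le_sum fun w hw => hpair v hv w hw
    have h2 : ∑ v ∈ A, ∑ w ∈ A, c v w * ((b : ℝ) + r) = D * (b + r) := by
      simp only [hD, hdA, Finset.sum_mul]
    have h3 : ∑ v ∈ A, ∑ w ∈ A, c v w * dB v = P := by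
      simp only [hP, hdA, Finset.sum_mul]
    have h4 : ∑ v ∈ A, ∑ w ∈ A, c v w * dB w = P := by
      rw [Finset.sum_comm, ← h3]
      exact Finset.sum_congr rfl fun v _ => Finset.sum_congr rfl fun w _ => by rw [hcs]
    simp only [mul_add (c _ _) (dB _), Finset.sum_add_distrib] at h1
    rw [h3, h4] at h1
    linarith
  set S : ℝ := ∑ v ∈ A, dB v with hS
  have hSP : D * b - P ≤ r * (a * b - S) := by
    have h1 : ∑ v ∈ A, dA v * (b - dB v) ≤ ∑ v ∈ A, (r : ℝ) * (b - dB v) :=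
      Finset.sum_le_sum fun v hv =>
        mul_le_mul_of_nonneg_right (hdAr v hv) (sub_nonneg.2 (hdBb v))
    have h2 : ∑ v ∈ A, dA v * (b - dB v) = D * b - P := by
      simp only [hD, hP, mul_sub, Finset.sum_sub_distrib, Finset.sum_mul]
    have h3 : ∑ v ∈ A, (r : ℝ) * (b - dB v) = r * (a * b - S) := by
      rw [← Finset.mul_sum, Finset.sum_sub_distrib]
      simp [hS, ha]
    linarith
  have hxd : ∀ v, ρ * x v ≤ dA v + dB v := by
    intro v
    refine (hx v).trans ?_
    rw [hsplit]
    refine add_le_add ?_ ?_ <;>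
      exact Finset.sum_le_sum fun w _ => mul_le_of_le_one_right (hc0 _ _) (hx1 w)
  have hρA : ρ ≤ ∑ v ∈ A, x v := by
    have := hx u
    rw [hu, mul_one, hsplit] at this
    have h1 : ∑ w ∈ A, c u w * x w = ∑ v ∈ A, x v :=
      Finset.sum_congr rfl fun w hw => by rw [huA w hw, one_mul]
    have h2 : ∑ w ∈ B, c u w * x w = 0 :=
      Finset.sum_eq_zero fun w hw => by rw [huB w hw, zero_mul]
    linarith
  have haρ : ρ ≤ a := by
    refine hρA.trans ?_
    calc ∑ v ∈ A, x v ≤ ∑ v ∈ A, (1 : ℝ) := Finset.sum_le_sum fun v _ => hx1 v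
      _ = a := by simp [ha]
  have hsq : ρ ^ 2 ≤ ∑ v ∈ A, dA v * x v + S := by
    have h1 : ρ ^ 2 ≤ ∑ v ∈ A, ρ * x v := by
      rw [← Finset.mul_sum]; nlinarith
    have h2 : ∑ v ∈ A, ρ * x v ≤ ∑ v ∈ A, (∑ w ∈ A, c v w * x w + dB v) := by
      refine Finset.sum_le_sum fun v _ => (hx v).trans ?_
      rw [hsplit]
      refine add_le_add le_rfl ?_
      exact Finset.sum_le_sum fun w _ => mul_le_of_le_one_right (hc0 _ _) (hx1 w)
    have h3 : ∑ v ∈ A, ∑ w ∈ A, c v w * x w = ∑ v ∈ A, dA v * x v := by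
      rw [Finset.sum_comm]
      refine Finset.sum_congr rfl fun v _ => ?_
      simp only [hdA, Finset.sum_mul]
      exact Finset.sum_congr rfl fun w _ => by rw [hcs]
    rw [Finset.sum_add_distrib, h3] at h2
    linarith
  have hcube : ρ * ρ ^ 2 ≤ r * D + P + ρ * S := by
    have h1 : ρ * ∑ v ∈ A, dA v * x v ≤ ∑ v ∈ A, (r * dA v + dA v * dB v) := by
      rw [Finset.mul_sum]
      refine Finset.sum_le_sum fun v hv => ?_
      nlinarith [mul_le_mul_of_nonneg_left (hxd v) (hdA0 v),
        mul_le_mul_of_nonneg_right (hdAr v hv) (hdA0 v)]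
    rw [Finset.sum_add_distrib, ← Finset.mul_sum] at h1
    nlinarith [mul_le_mul_of_nonneg_left hsq hρ0]
  have hmain : 2 * (r * ρ * (ρ ^ 2 - a * b)) ≤ D * (3 * r ^ 2 + r * b + ρ * r - ρ * b) := by
    have e1 : r * (ρ * ρ ^ 2) ≤ r * (r * D + P + ρ * S) := by gcongr
    have e2 := mul_le_mul_of_nonneg_left hSP hρ0
    have e3 := mul_le_mul_of_nonneg_left hP2 (by positivity : 0 ≤ r + ρ)
    clear_value D P S dA dB a b c
    linarith only [e1, e2, e3, hSP]
  have hDz : D = 0 := by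
    by_contra hne
    have hDpos : 0 < D := lt_of_le_of_ne hD0 (Ne.symm hne)
    have hl : 0 ≤ r * ρ * (ρ ^ 2 - a * b) := by
      have := sub_nonneg.2 hab
      positivity
    have hbr : 0 ≤ 3 * (r : ℝ) ^ 2 + r * b + ρ * r - ρ * b := by
      by_contra hneg
      push Not at hneg
      nlinarith [mul_neg_of_pos_of_neg hDpos hneg]
    have h1 := mul_le_mul_of_nonneg_right hDr hbr
    have h2 := numeric ρ a b n r hcard hr hρ0 hρn hn
    have h3 := mul_lt_mul_of_pos_left h2 (by linarith : (0 : ℝ) < r)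
    clear_value D P S dA dB a b c
    linarith only [h1, h3, hmain]
  have hdAz : ∀ v ∈ A, dA v = 0 :=
    (Finset.sum_eq_zero_iff_of_nonneg fun v _ => hdA0 v).1 hDz
  have hSab : S ≤ a * b := by
    calc S ≤ ∑ v ∈ A, (b : ℝ) := Finset.sum_le_sum fun v _ => hdBb v
      _ = a * b := by simp [ha]
  have hSρ : ρ ^ 2 ≤ S := by
    have : ∑ v ∈ A, dA v * x v = 0 :=
      Finset.sum_eq_zero fun v hv => by rw [hdAz v hv, zero_mul]
    linarith
  have hSeq : S = a * b := by linarith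
  have hcardeq : a * b = n ^ 2 / 4 := by
    apply le_antisymm habn
    have : ((n ^ 2 / 4 : ℕ) : ℝ) ≤ ((a * b : ℕ) : ℝ) := by push_cast at *; linarith
    exact_mod_cast this
  have hdBeq : ∀ v ∈ A, dB v = b := by
    refine (Finset.sum_eq_sum_iff_of_le fun v _ => hdBb v).1 ?_
    rw [← hS, hSeq]; simp [ha]
  have hAA : ∀ v ∈ A, ∀ w ∈ A, ¬ G.Adj v w := by
    intro v hv w hw h
    have := (Finset.sum_eq_zero_iff_of_nonneg fun w _ => hc0 v w).1 (hdAz v hv) w hw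
    simp [hc, h] at this
  have hAB : ∀ v ∈ A, ∀ w ∈ B, G.Adj v w := by
    intro v hv w hw
    have h1 : ∑ w ∈ B, c v w = ∑ w ∈ B, (1 : ℝ) := by
      have := hdBeq v hv
      simp only [hdB] at this
      rw [this]; simp [hb]
    have h2 := (Finset.sum_eq_sum_iff_of_le fun w _ => hc1 v w).1 h1 w hw
    by_contra h
    simp [hc, h] at h2
  have hBB : ∀ v ∈ B, ∀ w ∈ B, ¬ G.Adj v w := by
    intro v hv w hw h
    have h1 : A.card ≤ r := by
      refine le_trans (Finset.card_le_card ?_) (hco v w h)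
      intro z hz
      simp only [Finset.mem_filter, Finset.mem_univ, true_and]
      exact ⟨(hAB z hz v hv).symm, (hAB z hz w hw).symm⟩
    have h2 : (a : ℝ) ≤ r := by exact_mod_cast h1
    linarith
  have hmB : ∀ v, v ∉ A → v ∈ B := by
    intro v hv
    simpa [hA, hB] using hv
  refine ⟨A, ?_, ?_⟩
  · rw [← hcardeq]; congr 1; omega
  · intro v w
    by_cases h1 : v ∈ A <;> by_cases h2 : w ∈ A
    · simp [h1, h2, hAA v h1 w h2]
    · simp [h1, h2, hAB v h1 w (hmB w h2)]
    · simp [h1, h2, (hAB w h2 v (hmB v h1)).symm]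
    · simp [h1, h2, hBB v (hmB v h1) w (hmB w h2)]

lemma mem_spec {n : ℕ} (M : Matrix (Fin n) (Fin n) ℝ) (μ : ℝ) :
    μ ∈ spectrum ℝ M ↔ ∃ y : Fin n → ℝ, y ≠ 0 ∧ M.mulVec y = μ • y := by
  rw [spectrum.mem_iff, Matrix.isUnit_iff_isUnit_det, isUnit_iff_ne_zero, not_not,
    ← Matrix.exists_mulVec_eq_zero_iff]
  refine exists_congr fun y => and_congr_right fun _ => ?_
  rw [Matrix.sub_mulVec, sub_eq_zero, Algebra.algebraMap_eq_smul_one, Matrix.smul_mulVec,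
    Matrix.one_mulVec, eq_comm]

lemma iso_rad {n : ℕ} (G H : SimpleGraph (Fin n)) (e : G ≃g H) :
    adjSpectralRadius G = adjSpectralRadius H := by
  have key : ∀ (G H : SimpleGraph (Fin n)) (e : G ≃g H),
      spectrum ℝ (G.adjMatrix ℝ) ⊆ spectrum ℝ (H.adjMatrix ℝ) := by
    intro G H e μ hμ
    rw [mem_spec] at hμ ⊢
    obtain ⟨y, hy, hM⟩ := hμ
    refine ⟨fun v => y (e.symm v), ?_, ?_⟩
    · intro h
      apply hy
      funext v
      have := congrFun h (e v)
      simpa using this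
    · funext v
      have := congrFun hM (e.symm v)
      simp only [Matrix.mulVec, dotProduct, SimpleGraph.adjMatrix_apply, Pi.smul_apply] at this ⊢
      rw [← this]
      refine Fintype.sum_equiv e.symm.toEquiv _ _ fun w => ?_
      have : G.Adj (e.symm v) (e.symm w) ↔ H.Adj v w := e.symm.map_rel_iff
      simp [this]
  unfold adjSpectralRadius
  rw [Set.Subset.antisymm (key G H e) (key H G e.symm)]

lemma card_even (n : ℕ) : (univ.filter fun v : Fin n => v.val % 2 = 0).card = (n + 1) / 2 := by
  induction n with
  | zero => simp
  | succ k ih =>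
    rw [Fin.univ_castSuccEmb, Finset.filter_cons]
    split_ifs with h
    · rw [Finset.card_cons, Finset.filter_map, Finset.card_map]
      simp only [Fin.val_last] at h
      have : (univ.filter ((fun v : Fin (k+1) => v.val % 2 = 0) ∘ Fin.castSuccEmb)).card
        = (k + 1) / 2 := by rw [← ih]; rfl
      rw [this]; omega
    · rw [Finset.filter_map, Finset.card_map]
      simp only [Fin.val_last] at h
      have : (univ.filter ((fun v : Fin (k+1) => v.val % 2 = 0) ∘ Fin.castSuccEmb)).card
        = (k + 1) / 2 := by rw [← ih]; rfl
      rw [this]; omega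

lemma turan_adj {n : ℕ} (v w : Fin n) : (turanGraph n 2).Adj v w ↔ v.val % 2 ≠ w.val % 2 :=
  Iff.rfl

lemma turan_rad (n : ℕ) (hn : 2 ≤ n) :
    Real.sqrt ((n ^ 2 / 4 : ℕ) : ℝ) ≤ adjSpectralRadius (turanGraph n 2) := by
  unfold adjSpectralRadius
  apply le_csSup
  · exact (Matrix.finite_real_spectrum).bddAbove
  rw [mem_spec]
  have hpq : ((n + 1) / 2) * (n / 2) = n ^ 2 / 4 := by
    rcases Nat.even_or_odd' n with ⟨k, rfl | rfl⟩
    · have h1 : (2 * k) ^ 2 = 4 * (k * k) := by ring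
      have h2 : (2 * k + 1) / 2 = k := by omega
      have h3 : (2 * k) / 2 = k := by omega
      rw [h1, h2, h3]; omega
    · have h1 : (2 * k + 1) ^ 2 = 4 * ((k + 1) * k) + 1 := by ring
      have h2 : (2 * k + 1 + 1) / 2 = k + 1 := by omega
      have h3 : (2 * k + 1) / 2 = k := by omega
      rw [h1, h2, h3]; omega
  have hE := card_even n
  have hO : (univ.filter fun v : Fin n => ¬ v.val % 2 = 0).card = n / 2 := by
    have := Finset.card_filter_add_card_filter_not (s := (univ : Finset (Fin n)))
      (fun v => v.val % 2 = 0)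
    simp only [Finset.card_univ, Fintype.card_fin] at this
    omega
  set p := (n + 1) / 2 with hp
  set q := n / 2 with hq
  have hq1 : 1 ≤ q := by omega
  have hp1 : 1 ≤ p := by omega
  have hs : Real.sqrt ((n ^ 2 / 4 : ℕ) : ℝ) = Real.sqrt p * Real.sqrt q := by
    rw [← hpq, Nat.cast_mul, Real.sqrt_mul (by positivity)]
  rw [hs]
  have hqp : (0 : ℝ) < Real.sqrt q := Real.sqrt_pos.2 (by exact_mod_cast hq1)
  have hpp : (0 : ℝ) < Real.sqrt p := Real.sqrt_pos.2 (by exact_mod_cast hp1)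
  have hqq : Real.sqrt q * Real.sqrt q = q := Real.mul_self_sqrt (by positivity)
  have hpp2 : Real.sqrt p * Real.sqrt p = p := Real.mul_self_sqrt (by positivity)
  refine ⟨fun v => if v.val % 2 = 0 then Real.sqrt q else Real.sqrt p, ?_, ?_⟩
  · intro h
    have := congrFun h ⟨0, by omega⟩
    simp at this
    omega
  · funext v
    simp only [Matrix.mulVec, dotProduct, SimpleGraph.adjMatrix_apply, Pi.smul_apply, turan_adj,
      smul_eq_mul]
    by_cases hv : v.val % 2 = 0
    · have : ∀ w : Fin n, (if v.val % 2 ≠ w.val % 2 then (1 : ℝ) else 0) *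
          (if w.val % 2 = 0 then Real.sqrt q else Real.sqrt p) =
          if ¬ w.val % 2 = 0 then Real.sqrt p else 0 := by
        intro w
        by_cases hw : w.val % 2 = 0
        · simp [hv, hw]
        · have : w.val % 2 = 1 := by omega
          simp [hv, this]
      rw [Finset.sum_congr rfl fun w _ => this w, ← Finset.sum_filter, Finset.sum_const, hO,
        if_pos hv, nsmul_eq_mul, mul_assoc, hqq, mul_comm]
    · have : ∀ w : Fin n, (if v.val % 2 ≠ w.val % 2 then (1 : ℝ) else 0) *
          (if w.val % 2 = 0 then Real.sqrt q else Real.sqrt p) =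
          if w.val % 2 = 0 then Real.sqrt q else 0 := by
        intro w
        have hv' : v.val % 2 = 1 := by omega
        by_cases hw : w.val % 2 = 0
        · simp [hv', hw]
        · have : w.val % 2 = 1 := by omega
          simp [hv', this]
      rw [Finset.sum_congr rfl fun w _ => this w, ← Finset.sum_filter, Finset.sum_const, hE,
        if_neg hv, nsmul_eq_mul, mul_right_comm, hpp2]

lemma iso_of_card {n : ℕ} (G : SimpleGraph (Fin n)) (A : Finset (Fin n))
    (hadj : ∀ v w, G.Adj v w ↔ ¬ (v ∈ A ↔ w ∈ A)) (hA : A.card = (n + 1) / 2) :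
    Nonempty (G ≃g turanGraph n 2) := by
  have hc : Fintype.card {v : Fin n // v ∈ A} = Fintype.card {v : Fin n // v.val % 2 = 0} := by
    rw [Fintype.card_coe, Fintype.card_subtype, hA, ← card_even n]
  have hc' := Fintype.card_compl_eq_card_compl _ _ hc
  let e := Equiv.subtypeCongr (Fintype.equivOfCardEq hc) (Fintype.equivOfCardEq hc')
  have he : ∀ v, (e v).val % 2 = 0 ↔ v ∈ A := by
    intro v
    by_cases hv : v ∈ A
    · have : e v = (Fintype.equivOfCardEq hc ⟨v, hv⟩ : Fin n) := by
        simp [e, Equiv.subtypeCongr, hv]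
      simp only [hv, iff_true]
      rw [this]
      exact (Fintype.equivOfCardEq hc ⟨v, hv⟩).2
    · have : e v = (Fintype.equivOfCardEq hc' ⟨v, hv⟩ : Fin n) := by
        simp [e, Equiv.subtypeCongr, hv]
      simp only [hv, iff_false]
      rw [this]
      exact (Fintype.equivOfCardEq hc' ⟨v, hv⟩).2
  refine ⟨⟨e, ?_⟩⟩
  intro v w
  rw [turan_adj, hadj, ← he v, ← he w]
  omega

lemma main_aux {r n : ℕ} (hr : 1 ≤ r) (hn : 13 * r ≤ 2 * n)
    (G : SimpleGraph (Fin n)) (hfree : ¬ Contains G (book (r + 1)))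
    (hge : adjSpectralRadius (turanGraph n 2) ≤ adjSpectralRadius G) :
    Nonempty (G ≃g turanGraph n 2) := by
  have hn7 : 7 ≤ n := by omega
  have hge' := (turan_rad n (by omega)).trans hge
  have hpos : 0 < Real.sqrt ((n ^ 2 / 4 : ℕ) : ℝ) := by
    apply Real.sqrt_pos.2
    have : 0 < n ^ 2 / 4 := Nat.div_pos (by nlinarith) (by norm_num)
    exact_mod_cast this
  have hne : (spectrum ℝ (G.adjMatrix ℝ)).Nonempty := by
    by_contra h
    rw [Set.not_nonempty_iff_eq_empty] at h
    have : adjSpectralRadius G = 0 := by unfold adjSpectralRadius; rw [h, Real.sSup_empty]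
    linarith
  have hmem : adjSpectralRadius G ∈ spectrum ℝ (G.adjMatrix ℝ) :=
    hne.csSup_mem Matrix.finite_real_spectrum
  set ρ := adjSpectralRadius G with hρdef
  have hρ0 : 0 < ρ := by linarith
  have hρ : ((n ^ 2 / 4 : ℕ) : ℝ) ≤ ρ ^ 2 := (Real.sqrt_le_left hρ0.le).1 hge'
  rw [mem_spec] at hmem
  obtain ⟨y, hy, hM⟩ := hmem
  have : Nonempty (Fin n) := ⟨⟨0, by omega⟩⟩
  obtain ⟨u, hu⟩ := Finite.exists_max (fun v => |y v|)
  have hyu : 0 < |y u| := by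
    obtain ⟨v, hv⟩ := Function.ne_iff.1 hy
    exact lt_of_lt_of_le (abs_pos.2 hv) (hu v)
  obtain ⟨A, hA, hadj⟩ := core hr hn G (codeg_le G hfree) ρ hρ0.le hρ (fun v => |y v| / |y u|)
    (fun v => by positivity) (fun v => (div_le_one hyu).2 (hu v)) u (div_self hyu.ne') (by
      intro v
      have h1 := congrFun hM v
      simp only [Matrix.mulVec, dotProduct, SimpleGraph.adjMatrix_apply, Pi.smul_apply,
        smul_eq_mul] at h1
      have h2 : ρ * |y v| ≤ ∑ w, (if G.Adj v w then (1 : ℝ) else 0) * |y w| := by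
        calc ρ * |y v| = |ρ * y v| := by rw [abs_mul, abs_of_pos hρ0]
          _ ≤ _ := by
            rw [← h1]
            refine (Finset.abs_sum_le_sum_abs _ _).trans (Finset.sum_le_sum fun w _ => ?_)
            split_ifs <;> simp
      simp only [← mul_div_assoc, ← Finset.sum_div]
      gcongr)
  have hAn : A.card ≤ n := by simpa using Finset.card_le_univ A
  have hcases : A.card = (n + 1) / 2 ∨ A.card = n / 2 := by
    obtain ⟨b, hb⟩ := Nat.exists_eq_add_of_le hAn
    have hb' : n - A.card = b := by omega
    rw [hb'] at hA
    generalize A.card = a at *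
    have h1 : n ^ 2 ≤ 4 * (a * b) + 3 := by omega
    rw [hb] at h1
    have h2 : a ≤ b + 1 := by
      by_contra h
      obtain ⟨k, rfl⟩ := Nat.exists_eq_add_of_lt (not_le.1 h)
      nlinarith
    have h3 : b ≤ a + 1 := by
      by_contra h
      obtain ⟨k, rfl⟩ := Nat.exists_eq_add_of_lt (not_le.1 h)
      nlinarith
    omega
  rcases hcases with h | h
  · exact iso_of_card G A hadj h
  · refine iso_of_card G Aᶜ (fun v w => ?_) ?_
    · rw [hadj]; simp only [Finset.mem_compl]; tauto
    · rw [Finset.card_compl, Fintype.card_fin]; omega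

/-- Theorem 1.4: for `n ≥ 13r/2`, the unique spectral extremal `B_{r+1}`-free graph
on `n` vertices is `T_{n,2}`. -/
theorem stmt1 (r n : ℕ) (hr : 1 ≤ r) (hn : 13 * r ≤ 2 * n)
    (G : SimpleGraph (Fin n)) (hfree : ¬ Contains G (book (r + 1))) :
    adjSpectralRadius G ≤ adjSpectralRadius (turanGraph n 2) ∧
    (adjSpectralRadius G = adjSpectralRadius (turanGraph n 2) ↔
      Nonempty (G ≃g turanGraph n 2)) := by
  refine ⟨?_, fun h => main_aux hr hn G hfree h.ge, fun ⟨e⟩ => iso_rad G _ e⟩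
  by_contra hlt
  obtain ⟨e⟩ := main_aux hr hn G hfree (not_le.1 hlt).le
  exact hlt (iso_rad G _ e).le
end

section
/- Let n be an arbitrary positive integer and let G be a graph on n vertices with ρ(G) ≥ ρ(T_{n,2}) that is not isomorphic to T_{n,2}. Then the booksize of G is greater than n/6.5; that is, G contains the book B_r for some integer r > 2n/13. -/
open SimpleGraph Finset

attribute [local instance] Classical.propDecidable

open Matrix in
lemma perron_aux {n : ℕ} (hn : 0 < n) (G : SimpleGraph (Fin n)) :
    ∃ x : Fin n → ℝ, (∀ v, 0 ≤ x v) ∧ (∀ v, x v ≤ 1) ∧ (∃ u, x u = 1) ∧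
      ∀ v, ∑ w, (if G.Adj v w then x w else 0) = adjSpectralRadius G * x v := by
  have : Nonempty (Fin n) := ⟨⟨0, hn⟩⟩
  set M := G.adjMatrix ℝ with hM
  have hH : M.IsHermitian := by
    rw [Matrix.IsHermitian, conjTranspose_eq_transpose_of_trivial]
    exact G.isSymm_adjMatrix
  have hfin : (spectrum ℝ M).Finite := Matrix.finite_real_spectrum
  have hne : (spectrum ℝ M).Nonempty := by
    rw [hH.spectrum_real_eq_range_eigenvalues]
    exact Set.range_nonempty _
  have hmem : adjSpectralRadius G ∈ spectrum ℝ M := hne.csSup_mem hfin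
  have hle : ∀ l ∈ spectrum ℝ M, l ≤ adjSpectralRadius G := fun l hl => le_csSup hfin.bddAbove hl
  set ρ := adjSpectralRadius G with hρ
  have hpsd : (algebraMap ℝ (Matrix (Fin n) (Fin n) ℝ) ρ - M).PosSemidef := by
    rw [Matrix.posSemidef_iff_isHermitian_and_spectrum_nonneg]
    refine ⟨?_, ?_⟩
    · apply Matrix.IsHermitian.sub _ hH
      rw [Matrix.algebraMap_eq_diagonal]
      exact Matrix.isHermitian_diagonal _
    · rw [← spectrum.singleton_sub_eq]
      rintro l hl
      rw [Set.singleton_sub] at hl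
      obtain ⟨m, hm, rfl⟩ := hl
      have := hle m hm
      simpa using this
  have hev : Module.End.HasEigenvalue (Matrix.toLin' M) ρ := by
    rw [Module.End.hasEigenvalue_iff_mem_spectrum, Matrix.spectrum_toLin']
    exact hmem
  obtain ⟨y, hy, hy0⟩ := hev.exists_hasEigenvector
  rw [Module.End.mem_eigenspace_iff, Matrix.toLin'_apply] at hy
  set z : Fin n → ℝ := fun v => |y v| with hz
  have hentry : ∀ i j, 0 ≤ M i j := by
    intro i j
    simp only [hM, SimpleGraph.adjMatrix_apply]
    split_ifs <;> norm_num
  have h1 : ρ * (y ⬝ᵥ y) ≤ z ⬝ᵥ (M *ᵥ z) := by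
    have : ρ * (y ⬝ᵥ y) = y ⬝ᵥ (M *ᵥ y) := by
      rw [hy, dotProduct_smul, smul_eq_mul]
    rw [this]
    simp only [dotProduct, mulVec, Finset.mul_sum]
    apply Finset.sum_le_sum; intro i _
    apply Finset.sum_le_sum; intro j _
    calc y i * (M i j * y j) ≤ |y i * (M i j * y j)| := le_abs_self _
      _ = _ := by rw [abs_mul, abs_mul, abs_of_nonneg (hentry i j)]
  have h2 : z ⬝ᵥ z = y ⬝ᵥ y := by
    simp [dotProduct, hz]
  have hzz : (algebraMap ℝ (Matrix (Fin n) (Fin n) ℝ) ρ - M) *ᵥ z = ρ • z - M *ᵥ z := by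
    rw [sub_mulVec, Algebra.algebraMap_eq_smul_one, smul_mulVec, one_mulVec]
  have h3 : star z ⬝ᵥ ((algebraMap ℝ (Matrix (Fin n) (Fin n) ℝ) ρ - M) *ᵥ z) = 0 := by
    apply le_antisymm
    · rw [hzz, star_trivial, dotProduct_sub, dotProduct_smul, smul_eq_mul, h2]
      linarith
    · exact hpsd.dotProduct_mulVec_nonneg z
  rw [hpsd.dotProduct_mulVec_zero_iff, hzz, sub_eq_zero] at h3
  obtain ⟨u, hu⟩ := Finite.exists_max z
  have hzu : 0 < z u := by
    obtain ⟨i, hi⟩ : ∃ i, y i ≠ 0 := by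
      by_contra h; push Not at h; exact hy0 (funext h)
    exact lt_of_lt_of_le (abs_pos.mpr hi) (hu i)
  refine ⟨fun v => z v / z u, fun v => div_nonneg (abs_nonneg _) hzu.le,
    fun v => (div_le_one hzu).mpr (hu v), ⟨u, div_self hzu.ne'⟩, ?_⟩
  intro v
  have := congrFun h3 v
  simp only [Pi.smul_apply, smul_eq_mul, mulVec, dotProduct, hM, SimpleGraph.adjMatrix_apply] at this
  rw [← mul_div_assoc, this, Finset.sum_div]
  apply Finset.sum_congr rfl; intro w _
  split_ifs <;> simp

lemma sum_even (n : ℕ) (c : ℝ) :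
    ∑ i ∈ Finset.range n, (if i % 2 = 0 then c else 0) = ((n + 1) / 2 : ℕ) * c := by
  induction n with
  | zero => simp
  | succ k ih =>
    rw [Finset.sum_range_succ, ih]
    split_ifs with h
    · have : (k + 1 + 1) / 2 = (k + 1) / 2 + 1 := by omega
      rw [this]; push_cast; ring
    · have : (k + 1 + 1) / 2 = (k + 1) / 2 := by omega
      rw [this]; ring

lemma sum_odd (n : ℕ) (c : ℝ) :
    ∑ i ∈ Finset.range n, (if i % 2 = 0 then 0 else c) = (n / 2 : ℕ) * c := by
  induction n with
  | zero => simp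
  | succ k ih =>
    rw [Finset.sum_range_succ, ih]
    split_ifs with h
    · have : (k + 1) / 2 = k / 2 := by omega
      rw [this]; ring
    · have : (k + 1) / 2 = k / 2 + 1 := by omega
      rw [this]; push_cast; ring

open Matrix in
lemma turan_rho_gen {n : ℕ} (hn : 2 ≤ n) (G : SimpleGraph (Fin n))
    (hG : ∀ v w, G.Adj v w ↔ v.val % 2 ≠ w.val % 2) :
    Real.sqrt (((n + 1) / 2 : ℕ) * (n / 2 : ℕ)) ≤ adjSpectralRadius G := by
  set p : ℕ := (n + 1) / 2 with hp
  set q : ℕ := n / 2 with hq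
  set M := G.adjMatrix ℝ with hM
  have hfin : (spectrum ℝ M).Finite := Matrix.finite_real_spectrum
  have hpp : (0 : ℝ) ≤ p := Nat.cast_nonneg _
  have hqq : (0 : ℝ) ≤ q := Nat.cast_nonneg _
  apply le_csSup hfin.bddAbove
  rw [← Matrix.spectrum_toLin', ← Module.End.hasEigenvalue_iff_mem_spectrum]
  apply Module.End.hasEigenvalue_of_hasEigenvector
    (x := fun v : Fin n => if v.val % 2 = 0 then Real.sqrt q else Real.sqrt p)
  refine ⟨?_, ?_⟩
  · rw [Module.End.mem_eigenspace_iff, Matrix.toLin'_apply]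
    funext v
    simp only [Pi.smul_apply, smul_eq_mul, mulVec, dotProduct, hM, SimpleGraph.adjMatrix_apply, hG]
    rw [Finset.sum_fin_eq_sum_range]
    by_cases hv : v.val % 2 = 0
    · rw [if_pos hv, Real.sqrt_mul hpp, mul_assoc, Real.mul_self_sqrt hqq, mul_comm, ← sum_odd]
      apply Finset.sum_congr rfl
      intro i hi
      rw [dif_pos (Finset.mem_range.mp hi)]
      by_cases h : i % 2 = 0
      · simp [hv, h]
      · have : i % 2 = 1 := by omega
        simp [hv, this]
    · rw [if_neg hv, Real.sqrt_mul hpp, mul_comm (Real.sqrt p), mul_assoc, Real.mul_self_sqrt hpp,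
        mul_comm, ← sum_even]
      have hv' : v.val % 2 = 1 := by omega
      apply Finset.sum_congr rfl
      intro i hi
      rw [dif_pos (Finset.mem_range.mp hi)]
      by_cases h : i % 2 = 0
      · simp [hv', h]
      · have : i % 2 = 1 := by omega
        simp [hv', this]
  · intro h
    have := congrFun h ⟨0, by omega⟩
    have hq0 : (0 : ℝ) < q := by exact_mod_cast (show 0 < q by omega)
    simp at this
    omega

lemma turan_rho {n : ℕ} (hn : 2 ≤ n) :
    Real.sqrt (((n + 1) / 2 : ℕ) * (n / 2 : ℕ)) ≤ adjSpectralRadius (turanGraph n 2) :=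
  turan_rho_gen hn _ (fun _ _ => turanGraph_adj)

lemma turan_rho_sq {n : ℕ} (hn : 2 ≤ n) (ρ : ℝ) (hρ : adjSpectralRadius (turanGraph n 2) ≤ ρ) :
    0 < ρ ∧ ∀ a b : ℕ, a + b = n → (a * b : ℝ) ≤ ρ ^ 2 := by
  have h := (turan_rho hn).trans hρ
  have hpos : (0 : ℝ) < ((n + 1) / 2 : ℕ) * (n / 2 : ℕ) := by
    have h1 : 0 < (n + 1) / 2 := by omega
    have h2 : 0 < n / 2 := by omega
    positivity
  refine ⟨(Real.sqrt_pos.mpr hpos).trans_le h, ?_⟩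
  intro a b hab
  have h1 : (((n + 1) / 2 : ℕ) * (n / 2 : ℕ) : ℝ) ≤ ρ ^ 2 := by
    rw [← Real.sqrt_le_left ((Real.sqrt_pos.mpr hpos).trans_le h).le]; exact h
  refine le_trans ?_ h1
  have : a * b ≤ ((n + 1) / 2) * (n / 2) := by
    obtain ⟨k, hk | hk⟩ : ∃ k, n = 2 * k ∨ n = 2 * k + 1 := ⟨n / 2, by omega⟩
    · have e1 : (n + 1) / 2 = k := by omega
      have e2 : n / 2 = k := by omega
      rw [e1, e2]
      zify at *
      nlinarith [sq_nonneg ((a : ℤ) - b)]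
    · have e1 : (n + 1) / 2 = k + 1 := by omega
      have e2 : n / 2 = k := by omega
      rw [e1, e2]
      rcases le_or_gt a k with h | h
      · obtain ⟨d, rfl⟩ := Nat.exists_eq_add_of_le h
        have : b = a + d + 1 + d := by omega
        subst this; nlinarith
      · obtain ⟨d, rfl⟩ := Nat.exists_eq_add_of_lt h
        have : k = b + d := by omega
        subst this; nlinarith
  exact_mod_cast this

lemma book_aux {n : ℕ} (G : SimpleGraph (Fin n)) {u v : Fin n} (huv : G.Adj u v)
    (C : Finset (Fin n)) (hC : ∀ w ∈ C, G.Adj u w ∧ G.Adj v w) : Contains G (book C.card) := by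
  let e := C.equivFin
  have key : ∀ i, G.Adj u (e.symm i).1 ∧ G.Adj v (e.symm i).1 := fun i => hC _ (e.symm i).2
  have h2 : ∀ a : Fin 2, a = 0 ∨ a = 1 := by decide
  have ne1 := huv.ne
  refine ⟨⟨Sum.elim ![u, v] (fun i => (e.symm i).1), ?_⟩, ?_⟩
  · rintro (a | a) (b | b) h
    · rcases h2 a with rfl | rfl <;> rcases h2 b with rfl | rfl
      · rfl
      · exact absurd h ne1
      · exact absurd h.symm ne1
      · rfl
    · exfalso
      rcases h2 a with rfl | rfl
      · exact (key b).1.ne h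
      · exact (key b).2.ne h
    · exfalso
      rcases h2 b with rfl | rfl
      · exact (key a).1.ne h.symm
      · exact (key a).2.ne h.symm
    · rw [e.symm.injective (Subtype.ext h)]
  · rintro (a | a) (b | b) h
    · have hne := h.ne
      rcases h2 a with rfl | rfl <;> rcases h2 b with rfl | rfl
      · exact absurd rfl hne
      · exact huv
      · exact huv.symm
      · exact absurd rfl hne
    · rcases h2 a with rfl | rfl
      · exact (key b).1
      · exact (key b).2
    · rcases h2 b with rfl | rfl
      · exact (key a).1.symm
      · exact (key a).2.symm
    · simp [book] at h

/-- The arithmetic at the heart of the case where `A` spans an edge. -/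
lemma arith_aux (n α β S P Q E ρ : ℝ) (hn : 7 ≤ n) (hαβ : α + β = n) (hα : 0 ≤ α) (hS : 0 ≤ S) (hSβ : S ≤ β)
    (hρ0 : 0 < ρ) (h4 : n ^ 2 - 1 ≤ 4 * ρ ^ 2) (hab : α * β ≤ ρ ^ 2) (hE : 0 < E)
    (hEle : 2 * E ≤ α * (2 * n / 13)) (hP0 : 0 ≤ P)
    (h1 : ρ ^ 2 = α * S - Q + P) (hP : (ρ - 2 * n / 13) * P ≤ E * (S + 2 * n / 13))
    (hQ : E * (S - 2 * n / 13) ≤ (2 * n / 13) * Q) : False := by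
  have hρ : 0.49 * n ≤ ρ := by
    by_contra h
    push Not at h
    nlinarith
  have hP' : (4.37 / 13 * n) * P ≤ E * (S + 2 * n / 13) := by
    refine le_trans ?_ hP
    apply mul_le_mul_of_nonneg_right _ hP0
    linarith
  have hn0 : 0 < n := by linarith
  -- multiply by n
  have k1 : P * n ≤ 13 / 4.37 * (E * (S + 2 * n / 13)) := by
    norm_num at hP' ⊢; linarith
  have k2 : 13 / 2 * (E * (S - 2 * n / 13)) ≤ Q * n := by linarith
  set c : ℝ := 13 / 4.37 * (S + 2 * n / 13) - 13 / 2 * (S - 2 * n / 13) with hc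
  have k3 : ρ ^ 2 * n ≤ α * S * n + E * c := by
    rw [h1, hc]; nlinarith
  rcases lt_or_ge c 0 with hc0 | hc0
  · have : E * c < 0 := mul_neg_of_pos_of_neg hE hc0
    have : α * S ≤ α * β := mul_le_mul_of_nonneg_left hSβ hα
    nlinarith
  · have k4 : E * c ≤ (α * (n / 13)) * c := mul_le_mul_of_nonneg_right (by linarith) hc0
    have k5 : ρ ^ 2 ≤ α * S + α * c / 13 := by
      have : ρ ^ 2 * n ≤ (α * S + α * c / 13) * n := by nlinarith
      exact le_of_mul_le_mul_right this hn0
    have k6 : ρ ^ 2 ≤ α * (0.729 * S + 0.1123 * n) := by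
      refine k5.trans ?_
      have : S + c / 13 ≤ 0.729 * S + 0.1123 * n := by
        rw [hc]; norm_num; linarith
      calc α * S + α * c / 13 = α * (S + c / 13) := by ring
        _ ≤ _ := mul_le_mul_of_nonneg_left this hα
    have k7 : ρ ^ 2 ≤ α * (0.729 * (n - α) + 0.1123 * n) := by
      refine k6.trans (mul_le_mul_of_nonneg_left ?_ hα)
      linarith
    nlinarith [sq_nonneg (α - 0.577 * n)]

/-- A complete bipartite graph with an optimal number of edges is the Turan graph. -/
lemma iso_turan {n : ℕ} (G : SimpleGraph (Fin n)) (A : Finset (Fin n))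
    (hG : ∀ v w, G.Adj v w ↔ ¬ (v ∈ A ↔ w ∈ A))
    (hmax : ∀ a b : ℕ, a + b = n → a * b ≤ A.card * Aᶜ.card) :
    Nonempty (G ≃g turanGraph n 2) := by
  suffices h : G.IsTuranMaximal 2 by
    have := h.nonempty_iso_turanGraph
    rwa [Fintype.card_fin] at this
  have hcf : G.CliqueFree 3 := by
    intro s hs
    rw [SimpleGraph.is3Clique_iff] at hs
    obtain ⟨a, b, c, hab, hac, hbc, -⟩ := hs
    rw [hG] at hab hac hbc
    tauto
  have hcount : 2 * G.edgeFinset.card = 2 * (A.card * Aᶜ.card) := by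
    rw [← SimpleGraph.sum_degrees_eq_twice_card_edges]
    have hdeg : ∀ v, G.degree v = if v ∈ A then Aᶜ.card else A.card := by
      intro v
      rw [← SimpleGraph.card_neighborFinset_eq_degree]
      split_ifs with hv
      · congr 1; ext w; simp [hG, hv]
      · congr 1; ext w; simp [hG, hv]
    simp_rw [hdeg]
    rw [Finset.sum_ite]
    have e1 : (Finset.univ.filter fun v => v ∈ A) = A := by ext; simp
    have e2 : (Finset.univ.filter fun v => v ∉ A) = Aᶜ := by ext; simp
    rw [e1, e2]
    simp only [Finset.sum_const, smul_eq_mul]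
    ring
  refine ⟨hcf, ?_⟩
  intro H _ hH
  have h1 := hH.card_edgeFinset_le
  simp only [Fintype.card_fin] at h1
  have h2 := hmax ((n + 1) / 2) (n / 2) (by omega)
  have h3 : (n ^ 2 - (n % 2) ^ 2) * (2 - 1) / (2 * 2) + (n % 2).choose 2 ≤ ((n + 1) / 2) * (n / 2) := by
    obtain ⟨k, hk | hk⟩ : ∃ k, n = 2 * k ∨ n = 2 * k + 1 := ⟨n / 2, by omega⟩
    · have e1 : (n + 1) / 2 = k := by omega
      have e2 : n / 2 = k := by omega
      have e3 : n % 2 = 0 := by omega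
      rw [e1, e2, e3, hk]
      have : (2 * k) ^ 2 = 4 * (k * k) := by ring
      rw [this]; simp
    · have e1 : (n + 1) / 2 = k + 1 := by omega
      have e2 : n / 2 = k := by omega
      have e3 : n % 2 = 1 := by omega
      rw [e1, e2, e3, hk]
      have : (2 * k + 1) ^ 2 = 4 * ((k + 1) * k) + 1 := by ring
      rw [this]; simp
  have h4 : H.edgeFinset.card ≤ ((n + 1) / 2) * (n / 2) := by
    refine le_trans ?_ h3
    convert h1
  have : H.edgeFinset.card ≤ G.edgeFinset.card := by omega
  convert this

/-- Main inequality set-up. -/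
lemma main_aux_s2 {n : ℕ} (hn : 2 ≤ n) (G : SimpleGraph (Fin n)) (ρ : ℝ) (hρ0 : 0 < ρ)
    (hρ : ∀ a b : ℕ, a + b = n → (a * b : ℝ) ≤ ρ ^ 2)
    (x : Fin n → ℝ) (hx0 : ∀ v, 0 ≤ x v) (hx1 : ∀ v, x v ≤ 1) (u : Fin n) (hu : x u = 1)
    (hx : ∀ v, ∑ w, (if G.Adj v w then x w else 0) = ρ * x v)
    (hb : ∀ u v, G.Adj u v → ∀ C : Finset (Fin n), (∀ w ∈ C, G.Adj u w ∧ G.Adj v w) →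
      13 * C.card ≤ 2 * n) :
    ∃ A : Finset (Fin n), (∀ v w, G.Adj v w ↔ ¬ (v ∈ A ↔ w ∈ A)) ∧
      ∀ a b : ℕ, a + b = n → a * b ≤ A.card * Aᶜ.card := by
  set A : Finset (Fin n) := Finset.univ.filter (fun v => G.Adj u v) with hA
  have memA : ∀ v, v ∈ A ↔ G.Adj u v := by intro v; simp [hA]
  set g : Fin n → Fin n → ℝ := fun v w => if G.Adj v w then 1 else 0 with hg
  have g0 : ∀ v w, 0 ≤ g v w := by intro v w; simp only [hg]; split_ifs <;> norm_num
  have g1 : ∀ v w, g v w ≤ 1 := by intro v w; simp only [hg]; split_ifs <;> norm_num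
  have gsymm : ∀ v w, g v w = g w v := by intro v w; simp only [hg, G.adj_comm]
  set S : ℝ := ∑ w ∈ Aᶜ, x w with hS
  set T : Fin n → ℝ := fun v => ∑ w ∈ A, g v w * x w with hT
  set d : Fin n → ℝ := fun v => ∑ w ∈ A, g v w with hd
  set F : Fin n → ℝ := fun v => ∑ w ∈ Aᶜ, (1 - g v w) * x w with hF
  set r : ℝ := 2 * n / 13 with hr
  have hcard : A.card + Aᶜ.card = n := by
    rw [Finset.card_add_card_compl, Fintype.card_fin]
  have hcardR : (A.card : ℝ) + Aᶜ.card = n := by exact_mod_cast hcard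
  have hx' : ∀ v, ∑ w, g v w * x w = ρ * x v := by
    intro v; rw [← hx v]
    apply Finset.sum_congr rfl; intro w _
    simp only [hg]; split_ifs <;> simp
  have hAx : ∑ v ∈ A, x v = ρ := by
    have := hx u
    rw [hu, mul_one, ← Finset.sum_filter] at this
    exact this
  have heig : ∀ v, ρ * x v = T v + S - F v := by
    intro v
    rw [← hx' v, ← Finset.sum_add_sum_compl A]
    simp only [hT, hS, hF, sub_mul, one_mul, Finset.sum_sub_distrib]
    ring
  have hF0 : ∀ v, 0 ≤ F v := fun v => Finset.sum_nonneg fun w _ =>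
    mul_nonneg (by linarith [g1 v w]) (hx0 w)
  have hT0 : ∀ v, 0 ≤ T v := fun v => Finset.sum_nonneg fun w _ => mul_nonneg (g0 v w) (hx0 w)
  have hd0 : ∀ v, 0 ≤ d v := fun v => Finset.sum_nonneg fun w _ => g0 v w
  have hTd : ∀ v, T v ≤ d v := fun v => Finset.sum_le_sum fun w _ =>
    mul_le_of_le_one_right (g0 v w) (hx1 w)
  have hdr : ∀ v ∈ A, d v ≤ r := by
    intro v hv
    have h := hb u v ((memA v).1 hv) (A.filter fun w => G.Adj v w) (by
      intro w hw
      rw [Finset.mem_filter, memA] at hw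
      exact hw)
    have e : d v = ((A.filter fun w => G.Adj v w).card : ℝ) := by
      simp only [hd, hg, Finset.sum_boole]
    have h' : (13 * (A.filter fun w => G.Adj v w).card : ℝ) ≤ 2 * n := by exact_mod_cast h
    rw [e, hr]; linarith
  have hS0 : 0 ≤ S := Finset.sum_nonneg fun w _ => hx0 w
  have hSB : S ≤ Aᶜ.card := by
    calc S ≤ ∑ w ∈ Aᶜ, (1 : ℝ) := Finset.sum_le_sum fun w _ => hx1 w
      _ = _ := by simp
  set P : ℝ := ∑ v ∈ A, T v with hP
  set Q : ℝ := ∑ v ∈ A, F v with hQ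
  have hP0 : 0 ≤ P := Finset.sum_nonneg fun w _ => hT0 w
  have hQ0 : 0 ≤ Q := Finset.sum_nonneg fun w _ => hF0 w
  have hmain : ρ ^ 2 = A.card * S - Q + P := by
    calc ρ ^ 2 = ρ * ∑ v ∈ A, x v := by rw [hAx]; ring
      _ = ∑ v ∈ A, (T v + S - F v) := by
        rw [Finset.mul_sum]; exact Finset.sum_congr rfl fun v _ => heig v
      _ = _ := by
        rw [Finset.sum_sub_distrib, Finset.sum_add_distrib, Finset.sum_const, nsmul_eq_mul]
        ring
  have hprod := hρ _ _ hcard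
  set E : ℝ := (∑ v ∈ A, d v) / 2 with hE
  have hE0 : 0 ≤ E := div_nonneg (Finset.sum_nonneg fun v _ => hd0 v) (by norm_num)
  have hn0 : (0 : ℝ) < n := by exact_mod_cast (by omega : 0 < n)
  have h4 : (n : ℝ) ^ 2 - 1 ≤ 4 * ρ ^ 2 := by
    obtain ⟨k, hk | hk⟩ : ∃ k, n = 2 * k ∨ n = 2 * k + 1 := ⟨n / 2, by omega⟩
    · have := hρ k k (by omega)
      rw [hk]; push_cast; nlinarith
    · have := hρ (k + 1) k (by omega)
      rw [hk]; push_cast at this ⊢; nlinarith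
  rcases hE0.eq_or_lt with hEz | hEpos
  · -- `A` is independent
    have hdz : ∀ v ∈ A, d v = 0 := by
      have : ∑ v ∈ A, d v = 0 := by rw [hE] at hEz; linarith
      exact (Finset.sum_eq_zero_iff_of_nonneg fun v _ => hd0 v).1 this
    have hPz : P = 0 := Finset.sum_eq_zero fun v hv =>
      le_antisymm ((hTd v).trans (hdz v hv).le) (hT0 v)
    have hαpos : (0 : ℝ) < A.card := by
      rcases Nat.eq_zero_or_pos A.card with h | h
      · rw [Finset.card_eq_zero] at h
        rw [h, Finset.sum_empty] at hAx
        linarith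
      · exact_mod_cast h
    have hle1 : (A.card : ℝ) * S ≤ A.card * Aᶜ.card := mul_le_mul_of_nonneg_left hSB hαpos.le
    have hSeq : S = Aᶜ.card := by
      apply le_antisymm hSB
      refine le_of_mul_le_mul_left ?_ hαpos
      linarith
    have hQz : Q = 0 := by linarith
    have hρeq : ρ ^ 2 = A.card * Aᶜ.card := by rw [hmain, hQz, hPz, hSeq]; ring
    have hFz : ∀ v ∈ A, F v = 0 :=
      (Finset.sum_eq_zero_iff_of_nonneg fun v _ => hF0 v).1 hQz
    have hx1' : ∀ w ∈ Aᶜ, x w = 1 := by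
      have h : ∑ w ∈ Aᶜ, (1 - x w) = 0 := by
        rw [Finset.sum_sub_distrib, ← hS, hSeq]; simp
      intro w hw
      have := (Finset.sum_eq_zero_iff_of_nonneg fun v _ => by linarith [hx1 v]).1 h w hw
      linarith
    have hAB : ∀ v ∈ A, ∀ w ∉ A, G.Adj v w := by
      intro v hv w hw
      have hw' : w ∈ Aᶜ := by simpa using hw
      have := (Finset.sum_eq_zero_iff_of_nonneg fun w _ =>
        mul_nonneg (by linarith [g1 v w]) (hx0 w)).1 (hFz v hv) w hw'
      rw [hx1' w hw', mul_one] at this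
      by_contra hvw
      simp [hg, hvw] at this
    have hAA : ∀ v ∈ A, ∀ w ∈ A, ¬ G.Adj v w := by
      intro v hv w hw hvw
      have := (Finset.sum_eq_zero_iff_of_nonneg fun w _ => g0 v w).1 (hdz v hv) w hw
      simp [hg, hvw] at this
    have hBB : ∀ v ∉ A, ∀ w ∉ A, ¬ G.Adj v w := by
      intro v hv w hw hvw
      have h := hb v w hvw A (fun z hz => ⟨(hAB z hz v hv).symm, (hAB z hz w hw).symm⟩)
      have h' : (13 * A.card : ℝ) ≤ 2 * n := by exact_mod_cast h
      have hαρ : ρ ≤ A.card := by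
        calc ρ = ∑ v ∈ A, x v := hAx.symm
          _ ≤ ∑ v ∈ A, (1 : ℝ) := Finset.sum_le_sum fun w _ => hx1 w
          _ = _ := by simp
      have hn2 : (2 : ℝ) ≤ n := by exact_mod_cast hn
      nlinarith
    refine ⟨A, ?_, ?_⟩
    · intro v w
      by_cases hv : v ∈ A <;> by_cases hw : w ∈ A
      · simp [hv, hw, hAA v hv w hw]
      · simp [hv, hw, hAB v hv w hw]
      · simp [hv, hw, (hAB w hw v hv).symm]
      · simp [hv, hw, hBB v hv w hw]
    · intro a b hab
      have := hρ a b hab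
      rw [hρeq] at this
      exact_mod_cast this
  · exfalso
    have hn7 : (7 : ℝ) ≤ n := by
      have : ∃ v ∈ A, d v ≠ 0 := by
        by_contra h
        push Not at h
        rw [hE, Finset.sum_eq_zero h] at hEpos
        norm_num at hEpos
      obtain ⟨v, hv, hdv⟩ := this
      obtain ⟨w, hw, hgw⟩ := Finset.exists_ne_zero_of_sum_ne_zero hdv
      have hvw : G.Adj v w := by
        by_contra h
        simp [hg, h] at hgw
      have := hb u v ((memA v).1 hv) {w} (by
        intro z hz
        rw [Finset.mem_singleton] at hz
        subst hz
        exact ⟨(memA z).1 hw, hvw⟩)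
      rw [Finset.card_singleton] at this
      exact_mod_cast (by omega : 7 ≤ n)
    have hEr : 2 * E ≤ A.card * r := by
      calc 2 * E = ∑ v ∈ A, d v := by rw [hE]; ring
        _ ≤ ∑ v ∈ A, r := Finset.sum_le_sum hdr
        _ = _ := by rw [Finset.sum_const, nsmul_eq_mul]
    have hFF : ∀ v ∈ A, ∀ w ∈ A, G.Adj v w → S - r ≤ F v + F w := by
      intro v _ w _ hvw
      have h := hb v w hvw (Aᶜ.filter fun z => G.Adj v z ∧ G.Adj w z) (by
        intro z hz
        rw [Finset.mem_filter] at hz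
        exact hz.2)
      have h' : (13 * (Aᶜ.filter fun z => G.Adj v z ∧ G.Adj w z).card : ℝ) ≤ 2 * n := by
        exact_mod_cast h
      have hS' : S ≤ F v + F w + ((Aᶜ.filter fun z => G.Adj v z ∧ G.Adj w z).card : ℝ) := by
        rw [← Finset.sum_boole]
        simp only [hS, hF]
        rw [← Finset.sum_add_distrib, ← Finset.sum_add_distrib]
        apply Finset.sum_le_sum
        intro z _
        have a0 := hx0 z
        have a1 := hx1 z
        by_cases h1 : G.Adj v z <;> by_cases h2 : G.Adj w z <;> simp [hg, h1, h2, a0, a1]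
      rw [hr]; linarith
    have hdF : E * (S - r) ≤ ∑ v ∈ A, d v * F v := by
      have e1 : ∑ v ∈ A, d v * F v = ∑ v ∈ A, ∑ w ∈ A, g v w * F v := by
        apply Finset.sum_congr rfl; intro v _
        simp only [hd, Finset.sum_mul]
      have e2 : ∑ v ∈ A, d v * F v = ∑ v ∈ A, ∑ w ∈ A, g v w * F w := by
        rw [e1, Finset.sum_comm]
        apply Finset.sum_congr rfl; intro v _
        apply Finset.sum_congr rfl; intro w _
        rw [gsymm]
      have e3 : ∑ v ∈ A, ∑ w ∈ A, g v w * (S - r) ≤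
          ∑ v ∈ A, ∑ w ∈ A, g v w * F v + ∑ v ∈ A, ∑ w ∈ A, g v w * F w := by
        rw [← Finset.sum_add_distrib]
        apply Finset.sum_le_sum; intro v hv
        rw [← Finset.sum_add_distrib]
        apply Finset.sum_le_sum; intro w hw
        by_cases h : G.Adj v w
        · simpa [hg, h] using hFF v hv w hw h
        · simp [hg, h]
      have e4 : ∑ v ∈ A, ∑ w ∈ A, g v w * (S - r) = 2 * E * (S - r) := by
        simp only [← Finset.sum_mul]
        rw [hE]; ring
      linarith
    have hPd : P = ∑ v ∈ A, d v * x v := by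
      simp only [hP, hT, hd]
      rw [Finset.sum_comm]
      apply Finset.sum_congr rfl; intro v _
      rw [Finset.sum_mul]
      apply Finset.sum_congr rfl; intro w _
      rw [gsymm]
    have hQ1 : E * (S - r) ≤ r * Q := by
      refine hdF.trans ?_
      rw [hQ, Finset.mul_sum]
      exact Finset.sum_le_sum fun v hv => mul_le_mul_of_nonneg_right (hdr v hv) (hF0 v)
    have hP1 : (ρ - r) * P ≤ E * (S + r) := by
      have e1 : ρ * P = ∑ v ∈ A, d v * T v + 2 * E * S - ∑ v ∈ A, d v * F v := by
        have : 2 * E * S = ∑ v ∈ A, d v * S := by rw [← Finset.sum_mul, hE]; ring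
        rw [this, hPd, Finset.mul_sum, ← Finset.sum_add_distrib, ← Finset.sum_sub_distrib]
        apply Finset.sum_congr rfl; intro v _
        have := heig v
        linear_combination d v * this
      have e2 : ∑ v ∈ A, d v * T v ≤ r * P := by
        rw [hP, Finset.mul_sum]
        exact Finset.sum_le_sum fun v hv => mul_le_mul_of_nonneg_right (hdr v hv) (hT0 v)
      linarith
    exact arith_aux n A.card Aᶜ.card S P Q E ρ hn7 hcardR (Nat.cast_nonneg _) hS0 hSB hρ0 h4 hprod
      hEpos hEr hP0 hmain hP1 hQ1

/-- Corollary 1.5: a graph on `n` vertices with `ρ(G) ≥ ρ(T_{n,2})` which is not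
isomorphic to `T_{n,2}` has booksize greater than `n/6.5`, i.e. it contains `B_s`
for some `s > 2n/13`. -/
theorem stmt2 (n : ℕ) (hn : 0 < n) (G : SimpleGraph (Fin n))
    (hρ : adjSpectralRadius (turanGraph n 2) ≤ adjSpectralRadius G)
    (hiso : ¬ Nonempty (G ≃g turanGraph n 2)) :
    ∃ s : ℕ, 2 * n < 13 * s ∧ Contains G (book s) := by
  by_contra hcon
  push Not at hcon
  rcases Nat.lt_or_ge n 2 with h1 | h2
  · have : n = 1 := by omega
    subst this
    apply hiso
    have : G = turanGraph 1 2 := by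
      ext a b
      rw [Subsingleton.elim a b]
      simp
    rw [this]
    exact ⟨SimpleGraph.Iso.refl⟩
  · obtain ⟨hρ0, hρ2⟩ := turan_rho_sq h2 _ hρ
    obtain ⟨x, hx0, hx1, ⟨u, hu⟩, hx⟩ := perron_aux hn G
    obtain ⟨A, hA1, hA2⟩ := main_aux_s2 h2 G _ hρ0 hρ2 x hx0 hx1 u hu hx (by
      intro u v huv C hC
      by_contra h
      exact hcon C.card (by omega) (book_aux G huv C hC))
    exact hiso (iso_turan G A hA1 hA2)
end
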